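/- arXiv:1510.02013 — 4 statements merged into one kernel-verified Lean document; each statement's English description precedes it below -/
import Mathlib

section
/- Let k ≤ ℓ be natural numbers and let p_k, p_{k+1}, …, p_ℓ ∈ ℝ[λ] satisfy p_i(0) = 0, and set u = ∑_{i=k}^{ℓ} p_i·W_i ∈ Q. Then there exist elements u_2, …, u_{m₀} ∈ Q such that: each u_r is a finite sum u_r = ∑_j q_{r,j}·W_j where q_{r,j} ∈ ℝ[λ] is divisible by λ^r and q_{r,j} = 0 unless j ≥ rk + 1; and exp(u) = exp(p_k·W_k)·exp(p_{k+1}·W_{k+1})⋯exp(p_ℓ·W_ℓ)·exp(u_2)·exp(u_3)⋯exp(u_{m₀}) holds in Q. -/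
open Polynomial

/-- Relation on `D[λ]` whose ring-congruence closure corresponds to the two-sided ideal
generated by `λ^{m₀+1}`; `Q := RingQuot (lamRel D m₀)` is the quotient `D[λ]/(λ^{m₀+1})`. -/
def lamRel (D : Type*) [Ring D] (m₀ : ℕ) : Polynomial D → Polynomial D → Prop :=
  fun a b => a = X ^ (m₀ + 1) ∧ b = 0

/-- The polynomial `p(λ)·W_i ∈ D[λ]` for `p ∈ ℝ[λ]`. -/
noncomputable def pW {D : Type*} [Ring D] [Algebra ℝ D] (W : ℕ → D)
    (p : Polynomial ℝ) (i : ℕ) : Polynomial D :=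
  p.map (algebraMap ℝ D) * C (W i)

/-- The quotient map `D[λ] → Q = D[λ]/(λ^{m₀+1})`. -/
noncomputable def toQ {D : Type*} [Ring D] [Algebra ℝ D] (m₀ : ℕ) :
    Polynomial D →+* RingQuot (lamRel D m₀) := RingQuot.mkRingHom _

/-- The truncated exponential `exp(u) = ∑_{j=0}^{m₀} u^j/j!` in `Q`. -/
noncomputable def expQ {D : Type*} [Ring D] [Algebra ℝ D] {m₀ : ℕ}
    (u : RingQuot (lamRel D m₀)) : RingQuot (lamRel D m₀) :=
  ∑ j ∈ Finset.range (m₀ + 1), (j.factorial : ℝ)⁻¹ • u ^ j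

namespace WZ
set_option linter.unusedSectionVars false
open IsNilpotent

structure Filt {A : Type*} [Ring A] [Algebra ℚ A] (F : ℕ → Submodule ℚ A) (ε : A) (m : ℕ) :
    Prop where
  anti : ∀ r, 1 ≤ r → F (r + 1) ≤ F r
  br : ∀ r s, 1 ≤ r → 1 ≤ s → ∀ x ∈ F r, ∀ y ∈ F s, x * y - y * x ∈ F (r + s)
  bot : ∀ x ∈ F (m + 1), x = 0
  cen : ∀ y, Commute ε y
  nil : ε ^ (m + 1) = 0
  dvd : ∀ x ∈ F 1, ∃ y, x = ε * y

section
variable {A : Type*} [Ring A] [Algebra ℚ A]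

/-- polynomials with coefficients in a submodule -/
def PS (S : Submodule ℚ A) : Submodule ℚ A[X] where
  carrier := {f | ∀ n, f.coeff n ∈ S}
  add_mem' := fun ha hb n => by rw [coeff_add]; exact S.add_mem (ha n) (hb n)
  zero_mem' := fun n => by simp
  smul_mem' := fun c f hf n => by rw [coeff_smul]; exact S.smul_mem c (hf n)

theorem mem_PS {S : Submodule ℚ A} {f : A[X]} : f ∈ PS S ↔ ∀ n, f.coeff n ∈ S := Iff.rfl

theorem monomial_mem {S : Submodule ℚ A} {c : A} (h : c ∈ S) (n : ℕ) : monomial n c ∈ PS S := by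
  intro k
  rw [coeff_monomial]
  split_ifs
  · exact h
  · exact S.zero_mem

variable {F : ℕ → Submodule ℚ A} {ε : A} {m : ℕ}

theorem Filt.le (H : Filt F ε m) {r s : ℕ} (hr : 1 ≤ r) (h : r ≤ s) : F s ≤ F r := by
  induction s, h using Nat.le_induction with
  | base => exact le_rfl
  | succ n hn ih => exact (H.anti n (hr.trans hn)).trans ih

theorem PS_mono {S T : Submodule ℚ A} (h : S ≤ T) : PS S ≤ PS T := fun _ hf n => h (hf n)

theorem Filt.nilp (H : Filt F ε m) {x : A} (hx : x ∈ F 1) : x ^ (m + 1) = 0 := by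
  obtain ⟨y, rfl⟩ := H.dvd x hx
  rw [(H.cen y).mul_pow, H.nil, zero_mul]

theorem Filt.nilpP (H : Filt F ε m) {f : A[X]} (hf : f ∈ PS (F 1)) : f ^ (m + 1) = 0 := by
  choose y hy using fun n => H.dvd _ (hf n)
  have hfe : f = C ε * ∑ n ∈ f.support, monomial n (y n) := by
    conv_lhs => rw [f.as_sum_support]
    rw [Finset.mul_sum]
    refine Finset.sum_congr rfl fun n _ => ?_
    rw [C_mul_monomial, ← hy]
  have hc : ∀ g : A[X], Commute (C ε) g := by
    intro g
    ext n
    rw [coeff_C_mul, coeff_mul_C, (H.cen _).eq]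
  rw [hfe, (hc _).mul_pow, ← C_pow, H.nil, C_0, zero_mul]

theorem Filt.brP (H : Filt F ε m) {r s : ℕ} (hr : 1 ≤ r) (hs : 1 ≤ s) {f g : A[X]}
    (hf : f ∈ PS (F r)) (hg : g ∈ PS (F s)) : f * g - g * f ∈ PS (F (r + s)) := by
  intro n
  rw [coeff_sub, coeff_mul, coeff_mul, ← Finset.Nat.sum_antidiagonal_swap (f := fun x : ℕ × ℕ => g.coeff x.1 * f.coeff x.2),
    ← Finset.sum_sub_distrib]
  exact Submodule.sum_mem _ fun i _ => H.br r s hr hs _ (hf _) _ (hg _)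

theorem conj_eq {B : Type*} [Ring B] [Algebra ℚ B] {b : B} (hb : IsNilpotent b) (a : B) :
    exp b * a * exp (-b) =
      exp (LinearMap.mulLeft ℚ b - LinearMap.mulRight ℚ b : Module.End ℚ B) a := by
  obtain ⟨n, hn⟩ := hb
  have hn' : (-b) ^ n = 0 := by rw [neg_pow, hn, mul_zero]
  have h1 : (LinearMap.mulLeft ℚ b) ^ n = 0 := by
    rw [LinearMap.pow_mulLeft, hn]; simp
  have h2 : (LinearMap.mulRight ℚ (-b)) ^ n = 0 := by
    rw [LinearMap.pow_mulRight, hn']; simp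
  have e : (LinearMap.mulLeft ℚ b - LinearMap.mulRight ℚ b : Module.End ℚ B)
      = LinearMap.mulLeft ℚ b + LinearMap.mulRight ℚ (-b) := by
    ext x; simp [sub_eq_add_neg]
  have hc : Commute (LinearMap.mulLeft ℚ b : Module.End ℚ B) (LinearMap.mulRight ℚ (-b)) :=
    LinearMap.commute_mulLeft_right (R := ℚ) b (-b)
  rw [e, exp_add_of_commute hc ⟨n, h1⟩ ⟨n, h2⟩, exp_eq_sum h1, exp_eq_sum h2, exp_eq_sum hn,
    exp_eq_sum hn', Module.End.mul_apply]
  simp only [LinearMap.pow_mulLeft, LinearMap.pow_mulRight, LinearMap.sum_apply,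
    LinearMap.smul_apply, LinearMap.mulLeft_apply, LinearMap.mulRight_apply, Finset.sum_mul,
    Finset.mul_sum, mul_assoc, smul_mul_assoc, mul_smul_comm,
    Finset.smul_sum]
  rw [Finset.sum_comm]
  refine Finset.sum_congr rfl fun i _ => Finset.sum_congr rfl fun j _ => ?_
  rw [smul_comm]

theorem Filt.conj (H : Filt F ε m) {r : ℕ} (hr : 1 ≤ r) {a b : A[X]} (ha : a ∈ PS (F r))
    (hb : b ∈ PS (F r)) : exp b * a * exp (-b) - a ∈ PS (F (r + 1)) := by
  have hbn : IsNilpotent b := ⟨_, H.nilpP (PS_mono (H.le le_rfl hr) hb)⟩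
  rw [conj_eq hbn]
  set T : Module.End ℚ A[X] := LinearMap.mulLeft ℚ b - LinearMap.mulRight ℚ b with hT
  have hTn : IsNilpotent T := by
    obtain ⟨n, hn⟩ := hbn
    refine (LinearMap.commute_mulLeft_right (R := ℚ) b b).isNilpotent_sub ⟨n, ?_⟩ ⟨n, ?_⟩
    · rw [LinearMap.pow_mulLeft, hn]; simp
    · rw [LinearMap.pow_mulRight, hn]; simp
  obtain ⟨n, hn⟩ := hTn
  have hstep : ∀ s, 1 ≤ s → ∀ x ∈ PS (F s), T x ∈ PS (F (s + 1)) := by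
    intro s hs x hx
    have := H.brP hr hs hb hx
    exact PS_mono (H.le (by omega) (by omega)) this
  have hpow : ∀ i, (T ^ (i + 1)) a ∈ PS (F (r + 1)) := by
    intro i
    induction i with
    | zero => simpa using hstep r hr a ha
    | succ i ih =>
      rw [_root_.pow_succ', Module.End.mul_apply]
      exact PS_mono (H.le (by omega) (by omega)) (hstep (r + 1) (by omega) _ ih)
  have hn1 : T ^ (n + 1) = 0 := by rw [_root_.pow_succ, hn, zero_mul]
  rw [exp_eq_sum hn1, Finset.sum_range_succ']
  simp only [Nat.factorial_zero, Nat.cast_one, inv_one, pow_zero, one_smul, LinearMap.add_apply,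
    Module.End.one_apply, add_sub_cancel_right, LinearMap.sum_apply, LinearMap.smul_apply]
  exact Submodule.sum_mem _ fun i _ => Submodule.smul_mem _ _ (hpow i)

theorem deriv_pow {b : A[X]} (hb : Commute b (derivative b)) (n : ℕ) :
    derivative (b ^ (n + 1)) = ((n + 1 : ℕ) : ℚ) • (derivative b * b ^ n) := by
  induction n with
  | zero => simp
  | succ n ih =>
    rw [pow_succ', derivative_mul, ih, mul_smul_comm, ← mul_assoc b, hb.eq, mul_assoc, ← pow_succ',
      Nat.cast_succ (n + 1), add_smul, one_smul, add_comm]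

theorem deriv_exp {b : A[X]} (hb : Commute b (derivative b)) (hn : IsNilpotent b) :
    derivative (exp b) = derivative b * exp b := by
  obtain ⟨n, hn⟩ := hn
  have hn1 : b ^ (n + 1) = 0 := by rw [_root_.pow_succ, hn, zero_mul]
  conv_lhs => rw [exp_eq_sum hn1]
  rw [exp_eq_sum hn, Finset.sum_range_succ', derivative_add, derivative_sum, Finset.mul_sum]
  simp only [Nat.factorial_zero, Nat.cast_one, inv_one, pow_zero, one_smul, derivative_one,
    add_zero]
  refine Finset.sum_congr rfl fun i _ => ?_
  rw [derivative_smul, deriv_pow hb, smul_smul, mul_smul_comm]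
  congr 1
  rw [Nat.factorial_succ]
  push_cast
  have : (i.factorial : ℚ) ≠ 0 := by exact_mod_cast i.factorial_ne_zero
  have : (i : ℚ) + 1 ≠ 0 := by positivity
  field_simp

/-- evaluation at central points -/
noncomputable def ev (c : ℕ) : A[X] →+* A :=
  eval₂RingHom' (RingHom.id A) (c : A) fun a => (Nat.cast_commute c a).symm

theorem ev_monomial (c n : ℕ) (a : A) : ev c (monomial n a) = a * (c : A) ^ n := by
  simp [ev, eval₂RingHom']

theorem comm_mono (n : ℕ) (c : A) : Commute (monomial n c) (derivative (monomial n c)) := by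
  rw [derivative_monomial, Commute, SemiconjBy, monomial_mul_monomial, monomial_mul_monomial,
    add_comm, mul_assoc, (Nat.cast_commute n c).eq]

theorem derivative_mem {S : Submodule ℚ A} {f : A[X]} (hf : f ∈ PS S) : derivative f ∈ PS S := by
  intro n
  rw [coeff_derivative, ← Nat.cast_succ, ← nsmul_eq_mul']
  exact S.nsmul_mem (hf _) _ 

theorem Filt.step (H : Filt F ε m) {r : ℕ} (hr : 1 ≤ r) {g a b : A[X]}
    (hg : derivative g = a * g) (ha : a ∈ PS (F r)) (hb : b ∈ PS (F r))
    (hc : Commute b (derivative b)) :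
    ∃ a', a' ∈ PS (F r) ∧ derivative (exp b * g) = a' * (exp b * g) ∧
      a' - (a + derivative b) ∈ PS (F (r + 1)) := by
  have hbn : IsNilpotent b := ⟨_, H.nilpP (PS_mono (H.le le_rfl hr) hb)⟩
  have h1 := H.conj hr ha hb
  refine ⟨derivative b + exp b * a * exp (-b), ?_, ?_, ?_⟩
  · refine Submodule.add_mem _ (derivative_mem hb) ?_
    have := Submodule.add_mem _ (PS_mono (H.anti r hr) h1) ha
    simpa using this
  · rw [derivative_mul, hg, deriv_exp hc hbn, add_mul, mul_assoc, mul_assoc (exp b * a),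
      ← mul_assoc (exp (-b)), exp_neg_mul_exp_self hbn, one_mul, mul_assoc]
  · convert h1 using 1
    abel

/-- list version -/
theorem Filt.steps (H : Filt F ε m) {r : ℕ} (hr : 1 ≤ r) (l : List (ℕ × A))
    (hl : ∀ x ∈ l, x.2 ∈ F r) {g a : A[X]}
    (hg : derivative g = a * g) (ha : a ∈ PS (F r)) :
    ∃ a', a' ∈ PS (F r) ∧ derivative ((l.map fun x => exp (monomial x.1 x.2)).prod * g)
        = a' * ((l.map fun x => exp (monomial x.1 x.2)).prod * g) ∧
      a' - (a + (l.map fun x => derivative (monomial x.1 x.2)).sum) ∈ PS (F (r + 1)) := by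
  induction l with
  | nil => exact ⟨a, ha, by simpa using hg, by simp⟩
  | cons x l ih =>
    obtain ⟨a1, h1, h2, h3⟩ := ih fun y hy => hl y (List.mem_cons_of_mem _ hy)
    obtain ⟨a2, h4, h5, h6⟩ := H.step hr h2 h1
      (monomial_mem (hl x List.mem_cons_self) x.1) (comm_mono _ _)
    refine ⟨a2, h4, ?_, ?_⟩
    · simpa [mul_assoc] using h5
    · have := Submodule.add_mem _ h3 h6
      convert this using 1
      simp only [List.map_cons, List.sum_cons]
      abel

theorem Filt.exp_ev (H : Filt F ε m) {c n : ℕ} {x : A} (hx : x ∈ F 1) :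
    ev c (exp (monomial n x)) = exp (x * (c : A) ^ n) := by
  rw [map_exp ⟨_, H.nilpP (monomial_mem hx n)⟩, ev_monomial]

theorem Filt.inv_prod (H : Filt F ε m) (l : List A) (hl : ∀ x ∈ l, x ∈ F 1) :
    (l.map exp).prod * ((l.reverse.map fun x => exp (-x)).prod) = 1 := by
  induction l with
  | nil => simp
  | cons x l ih =>
    have hx : IsNilpotent x := ⟨_, H.nilp (hl x List.mem_cons_self)⟩
    have := ih fun y hy => hl y (List.mem_cons_of_mem _ hy)
    simp only [List.map_cons, List.prod_cons, List.reverse_cons, List.map_append, List.map_nil,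
      List.prod_append, List.prod_nil, mul_one]
    rw [mul_assoc, ← mul_assoc (l.map exp).prod, this, one_mul, exp_mul_exp_neg_self hx]

/-- Solutions of `g' = a g`. -/
theorem Filt.solve (H : Filt F ε m) (d : ℕ) : ∀ r, 1 ≤ r → m + 1 ≤ r + d → ∀ g a : A[X],
    derivative g = a * g → a ∈ PS (F r) →
    ∃ l : List A, (∀ x ∈ l, x ∈ F r) ∧ ev 1 g = (l.map exp).prod * ev 0 g := by
  induction d with
  | zero =>
    intro r hr hd g a hg ha
    have ha0 : a = 0 := by
      ext n
      exact H.bot _ (H.le (by omega) hd (ha n))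
    rw [ha0, zero_mul] at hg
    have hgC : g = C (g.coeff 0) := by
      ext n
      rw [coeff_C]
      split_ifs with hn
      · rw [hn]
      · obtain ⟨k, rfl⟩ := Nat.exists_eq_succ_of_ne_zero hn
        have h1 := congrArg (fun f => coeff f k) hg
        simp only [coeff_derivative, coeff_zero] at h1
        rw [← Nat.cast_succ, ← nsmul_eq_mul', ← Nat.cast_smul_eq_nsmul ℚ] at h1
        have := congrArg (fun z => ((k.succ : ℕ) : ℚ)⁻¹ • z) h1
        simp only [smul_smul, smul_zero] at this
        rwa [inv_mul_cancel₀ (by positivity), one_smul] at this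
    refine ⟨[], by simp, ?_⟩
    rw [hgC, ← monomial_zero_left, ev_monomial, ev_monomial]
    simp
  | succ d ih =>
    intro r hr hd g a hg ha
    let z : ℕ → ℕ × A := fun n => (n + 1, -((n + 1 : ℚ)⁻¹ • a.coeff n))
    let L := (List.range (a.natDegree + 1)).map z
    have hL : ∀ x ∈ L, x.2 ∈ F r := by
      intro x hx
      obtain ⟨n, _, rfl⟩ := List.mem_map.1 hx
      exact Submodule.neg_mem _ (Submodule.smul_mem _ _ (ha n))
    obtain ⟨a', h1, h2, h3⟩ := H.steps hr L hL hg ha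
    have hsum : (L.map fun x => derivative (monomial x.1 x.2)).sum = -a := by
      conv_rhs => rw [a.as_sum_range]
      simp only [L, List.map_map]
      rw [← Finset.sum_neg_distrib, Finset.sum_range, ← List.sum_ofFn, List.ofFn_eq_map,
        ← List.map_coe_finRange_eq_range, List.map_map]
      congr 1
      refine List.map_congr_left fun i _ => ?_
      simp only [Function.comp, z]
      rw [derivative_monomial, ← map_neg]
      congr 1
      rw [← nsmul_eq_mul', ← Nat.cast_smul_eq_nsmul ℚ, smul_neg, smul_smul]
      push_cast
      rw [mul_inv_cancel₀ (by positivity), one_smul]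
    rw [hsum, add_neg_cancel, sub_zero] at h3
    obtain ⟨l, hl, he⟩ := ih (r + 1) (by omega) (by omega) _ _ h2 h3
    have hev : ∀ c : ℕ, ev c ((L.map fun x => exp (monomial x.1 x.2)).prod)
        = (L.map fun x => exp (x.2 * (c : A) ^ x.1)).prod := by
      intro c
      rw [map_list_prod, List.map_map]
      congr 1
      exact List.map_congr_left fun x hx => H.exp_ev (H.le le_rfl hr (hL x hx))
    have hev0 : (L.map fun x => exp (x.2 * ((0 : ℕ) : A) ^ x.1)).prod = 1 := by
      apply List.prod_eq_one
      intro y hy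
      obtain ⟨x, hx, rfl⟩ := List.mem_map.1 hy
      obtain ⟨n, _, rfl⟩ := List.mem_map.1 hx
      simp [z, exp_zero]
    rw [map_mul, map_mul, hev, hev, hev0, one_mul] at he
    simp only [Nat.cast_one, one_pow, mul_one] at he
    let M := L.map Prod.snd
    have hM : ∀ x ∈ M, x ∈ F r := by
      intro x hx
      obtain ⟨y, hy, rfl⟩ := List.mem_map.1 hx
      exact hL y hy
    let N := M.map fun x => -x
    have hN : ∀ x ∈ N, x ∈ F r := by
      intro x hx
      obtain ⟨y, hy, rfl⟩ := List.mem_map.1 hx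
      exact Submodule.neg_mem _ (hM y hy)
    refine ⟨N.reverse ++ l, ?_, ?_⟩
    · intro x hx
      rcases List.mem_append.1 hx with hx | hx
      · exact hN x (List.mem_reverse.1 hx)
      · exact H.anti r hr (hl x hx)
    · rw [List.map_append, List.prod_append, mul_assoc, ← he, ← mul_assoc]
      have hi := H.inv_prod N.reverse fun x hx =>
        H.le le_rfl hr (hN x (List.mem_reverse.1 hx))
      have : (N.reverse.reverse.map fun x => exp (-x)).prod = (L.map fun x => exp x.2).prod := by
        simp [N, M, List.map_map, Function.comp_def]
      rw [this] at hi
      rw [hi, one_mul]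

theorem Filt.split (H : Filt F ε m) {r : ℕ} (hr : 1 ≤ r) (l : List A) (hl : ∀ x ∈ l, x ∈ F r)
    (hs : l.sum = 0) :
    ∃ l' : List A, (∀ x ∈ l', x ∈ F (r + 1)) ∧ (l.map exp).prod = (l'.map exp).prod := by
  let L := l.map fun x => ((1 : ℕ), x)
  have hL : ∀ x ∈ L, x.2 ∈ F r := by
    intro x hx
    obtain ⟨y, hy, rfl⟩ := List.mem_map.1 hx
    exact hl y hy
  obtain ⟨a, h1, h2, h3⟩ := H.steps (g := 1) (a := 0) hr L hL (by simp) (Submodule.zero_mem _)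
  have hsum : (L.map fun x => derivative (monomial x.1 x.2)).sum = 0 := by
    have : (L.map fun x => derivative (monomial x.1 x.2)) = l.map (C : A →+* A[X]) := by
      simp [L, List.map_map, Function.comp_def, derivative_monomial]
    rw [this, ← map_list_sum, hs, map_zero]
  rw [hsum, add_zero, sub_zero] at h3
  obtain ⟨l', hl', he⟩ := H.solve m (r + 1) (by omega) (by omega) _ _ h2 h3
  refine ⟨l', hl', ?_⟩
  have hev : ∀ c : ℕ, ev c ((L.map fun x => exp (monomial x.1 x.2)).prod * 1)
      = (l.map fun x => exp (x * (c : A))).prod := by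
    intro c
    rw [mul_one, map_list_prod, List.map_map]
    simp only [L, List.map_map]
    congr 1
    refine List.map_congr_left fun x hx => ?_
    have := H.exp_ev (c := c) (n := 1) (H.le le_rfl hr (hl x hx))
    simpa using this
  rw [hev, hev] at he
  simpa [exp_zero] using he

theorem Filt.collect (H : Filt F ε m) (d : ℕ) : ∀ r, 1 ≤ r → r + d = m + 1 → ∀ l : List A,
    (∀ x ∈ l, x ∈ F r) → ∃ y : ℕ → A, (∀ s, r ≤ s → y s ∈ F s) ∧
      (l.map exp).prod = ((List.range' r d).map fun s => exp (y s)).prod := by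
  induction d with
  | zero =>
    intro r hr hd l hl
    refine ⟨0, fun s _ => Submodule.zero_mem _, ?_⟩
    simp only [List.range'_zero, List.map_nil, List.prod_nil]
    apply List.prod_eq_one
    intro y hy
    obtain ⟨x, hx, rfl⟩ := List.mem_map.1 hy
    have hx' := hl x hx
    rw [show r = m + 1 by omega] at hx'
    rw [H.bot x hx', exp_zero]
  | succ d ih =>
    intro r hr hd l hl
    have hsm : l.sum ∈ F r := list_sum_mem hl
    obtain ⟨l', hl', he⟩ := H.split hr (-l.sum :: l) (by
      intro x hx
      rcases List.mem_cons.1 hx with rfl | hx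
      · exact Submodule.neg_mem _ hsm
      · exact hl x hx) (by simp)
    obtain ⟨y, hy, hye⟩ := ih (r + 1) (by omega) (by omega) l' hl'
    refine ⟨fun s => if s = r then l.sum else y s, ?_, ?_⟩
    · intro s hs
      dsimp only
      split_ifs with h
      · rw [h]; exact hsm
      · exact hy s (by omega)
    · have hn : IsNilpotent l.sum := ⟨_, H.nilp (H.le le_rfl hr hsm)⟩
      rw [List.range'_succ, List.map_cons, List.prod_cons]
      simp only [if_true]
      have : ((List.range' (r + 1) d).map fun s => exp (if s = r then l.sum else y s))
          = (List.range' (r + 1) d).map fun s => exp (y s) := by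
        refine List.map_congr_left fun s hs => ?_
        rw [if_neg]
        have := List.mem_range'_1.1 hs
        omega
      rw [this, ← hye, ← he, List.map_cons, List.prod_cons, ← mul_assoc,
        exp_mul_exp_neg_self hn, one_mul]

theorem Filt.main (H : Filt F ε m) (hm : 1 ≤ m) (l : List A) (hl : ∀ x ∈ l, x ∈ F 1) :
    ∃ y : ℕ → A, (∀ s, 2 ≤ s → y s ∈ F s) ∧
      exp l.sum = (l.map exp).prod * ((List.range' 2 (m - 1)).map fun s => exp (y s)).prod := by
  have hsm : l.sum ∈ F 1 := list_sum_mem hl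
  let N := l.reverse.map fun x => -x
  obtain ⟨l', hl', he⟩ := H.split le_rfl (N ++ [l.sum]) (by
      intro x hx
      rcases List.mem_append.1 hx with hx | hx
      · obtain ⟨y, hy, rfl⟩ := List.mem_map.1 hx
        exact Submodule.neg_mem _ (hl y (List.mem_reverse.1 hy))
      · rw [List.mem_singleton.1 hx]; exact hsm) (by
      have : N.sum = -l.sum := by
        rw [← List.sum_reverse l, List.sum_neg]
      simp [this])
  obtain ⟨y, hy, hye⟩ := H.collect (m - 1) 2 (by omega) (by omega) l' hl'
  refine ⟨y, hy, ?_⟩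
  rw [← hye, ← he, List.map_append, List.prod_append, ← mul_assoc]
  have := H.inv_prod l hl
  simp only [N, List.map_map, Function.comp_def]
  rw [this]
  simp

end
end WZ
namespace WZ
open IsNilpotent

section
variable {D : Type*} [Ring D] [Algebra ℝ D]

theorem map_comm (q : ℝ[X]) (f : D[X]) : Commute (q.map (algebraMap ℝ D)) f := by
  induction q using Polynomial.induction_on' with
  | add p q hp hq => rw [Polynomial.map_add]; exact hp.add_left hq
  | monomial n a =>
    rw [map_monomial, ← C_mul_X_pow_eq_monomial]
    refine Commute.mul_left ?_ (commute_X_pow f n).symm.symm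
    exact Algebra.commutes (A := D[X]) a f

theorem pW_bracket (W : ℕ → D) (α : ℕ → ℕ → ℝ)
    (hW : ∀ n m : ℕ, W n * W m - W m * W n = α n m • W (n + m)) (q q' : ℝ[X]) (i j : ℕ) :
    pW W q i * pW W q' j - pW W q' j * pW W q i = pW W (C (α i j) * (q * q')) (i + j) := by
  unfold pW
  have h1 : ∀ f g : D[X], (q.map (algebraMap ℝ D) * f) * (q'.map (algebraMap ℝ D) * g)
      = (q.map (algebraMap ℝ D) * q'.map (algebraMap ℝ D)) * (f * g) := by
    intro f g
    rw [mul_assoc, ← mul_assoc f, ← (map_comm q' f).eq, mul_assoc, mul_assoc]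
  have h2 : ∀ f g : D[X], (q'.map (algebraMap ℝ D) * f) * (q.map (algebraMap ℝ D) * g)
      = (q.map (algebraMap ℝ D) * q'.map (algebraMap ℝ D)) * (f * g) := by
    intro f g
    rw [mul_assoc, ← mul_assoc f, ← (map_comm q f).eq, mul_assoc, ← mul_assoc,
      (map_comm q' _).eq]
  rw [h1, h2, ← mul_sub, ← C_mul, ← C_mul, ← C_sub, hW, Algebra.smul_def, C_mul,
    Polynomial.map_mul, Polynomial.map_mul, map_C, ← mul_assoc]
  congr 1
  have := (map_comm (D := D) (C (α i j))
    (q.map (algebraMap ℝ D) * q'.map (algebraMap ℝ D))).eq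
  rw [map_C] at this
  rw [this]

theorem pW_add (W : ℕ → D) (p q : ℝ[X]) (i : ℕ) : pW W (p + q) i = pW W p i + pW W q i := by
  simp [pW, add_mul]

theorem pW_zero (W : ℕ → D) (i : ℕ) : pW W 0 i = 0 := by
  simp [pW]

theorem pW_X_pow (W : ℕ → D) (r : ℕ) (q : ℝ[X]) (i : ℕ) :
    pW W (X ^ r * q) i = X ^ r * pW W q i := by
  simp [pW, mul_assoc]

theorem toQ_X_pow (m₀ : ℕ) : (toQ m₀ (X : D[X])) ^ (m₀ + 1) = 0 := by
  rw [← map_pow, ← map_zero (toQ (D := D) m₀)]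
  exact RingQuot.mkRingHom_rel ⟨rfl, rfl⟩

noncomputable def ratAlg (m₀ : ℕ) : Algebra ℚ (RingQuot (lamRel D m₀)) :=
  Algebra.compHom _ (algebraMap ℚ ℝ)

theorem ratAlg_smul (m₀ : ℕ) (c : ℚ) (f : D[X]) :
    letI := ratAlg (D := D) m₀
    c • toQ m₀ f = toQ m₀ (C (algebraMap ℝ D (c : ℝ)) * f) := by
  letI := ratAlg (D := D) m₀
  have h : c • toQ m₀ f = (c : ℝ) • toQ m₀ f := rfl
  rw [h]
  have h2 : ∀ g : D[X], toQ m₀ g = RingQuot.mkAlgHom ℝ (lamRel D m₀) g := by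
    intro g
    rw [toQ, ← RingQuot.mkAlgHom_coe ℝ]
    rfl
  rw [h2, h2, ← map_smul, Algebra.smul_def]
  rfl

theorem expQ_eq (m₀ : ℕ) (x : RingQuot (lamRel D m₀)) (hx : x ^ (m₀ + 1) = 0) :
    letI := ratAlg (D := D) m₀
    exp x = expQ x := by
  letI := ratAlg (D := D) m₀
  rw [exp_eq_sum hx, expQ]
  refine Finset.sum_congr rfl fun j _ => ?_
  have h : ∀ c : ℚ, c • x ^ j = (c : ℝ) • x ^ j := fun _ => rfl
  rw [h]
  simp

def idx (k r : ℕ) : ℕ := if r = 1 then k else r * k + 1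

def gens (W : ℕ → D) (m₀ k r : ℕ) : Set (RingQuot (lamRel D m₀)) :=
  {x | ∃ (q : ℝ[X]) (j : ℕ), X ^ r ∣ q ∧ idx k r ≤ j ∧ x = toQ m₀ (pW W q j)}

noncomputable def FF (W : ℕ → D) (m₀ k r : ℕ) :
    letI := ratAlg (D := D) m₀
    Submodule ℚ (RingQuot (lamRel D m₀)) :=
  letI := ratAlg (D := D) m₀
  Submodule.span ℚ (gens W m₀ k r)

theorem idx_add {k r s i j : ℕ} (hr : 1 ≤ r) (hs : 1 ≤ s) (hi : idx k r ≤ i) (hj : idx k s ≤ j)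
    (hij : i ≠ j) : idx k (r + s) ≤ i + j := by
  have : r + s ≠ 1 := by omega
  simp only [idx, this, if_false, add_mul] at *
  split_ifs at hi hj with h1 h2 h3
  · subst h1 h2; omega
  · subst h1; omega
  · subst h3; omega
  · omega

theorem filt (W : ℕ → D) (α : ℕ → ℕ → ℝ)
    (hW : ∀ n m : ℕ, W n * W m - W m * W n = α n m • W (n + m)) (m₀ k : ℕ) :
    letI := ratAlg (D := D) m₀
    Filt (FF W m₀ k) (toQ m₀ X) m₀ := by
  letI := ratAlg (D := D) m₀
  have hcen : ∀ y, Commute (toQ m₀ (X : D[X])) y := by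
    intro y
    obtain ⟨f, rfl⟩ := RingQuot.mkRingHom_surjective (lamRel D m₀) y
    have : X * f = f * X := (commute_X f).eq
    exact ((commute_X f).map (toQ m₀))
  refine ⟨?_, ?_, ?_, hcen, toQ_X_pow m₀, ?_⟩
  · intro r hr
    refine Submodule.span_mono ?_
    rintro x ⟨q, j, h1, h2, rfl⟩
    refine ⟨q, j, (pow_dvd_pow X (Nat.le_succ r)).trans h1, le_trans ?_ h2, rfl⟩
    have : r + 1 ≠ 1 := by omega
    simp only [idx, this, if_false, add_mul]
    split_ifs with h
    · subst h; omega
    · omega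
  · intro r s hr hs x hx y hy
    induction hx, hy using Submodule.span_induction₂ with
    | mem_mem x y hx hy =>
      obtain ⟨q, i, h1, h2, rfl⟩ := hx
      obtain ⟨q', j, h3, h4, rfl⟩ := hy
      rw [← map_mul, ← map_mul, ← map_sub]
      by_cases hij : i = j
      · subst hij
        rw [pW_bracket W (fun n m => if n = m then 0 else α n m)]
        · simp only [if_true, C_0, zero_mul, pW_zero, map_zero]
          exact Submodule.zero_mem _
        · intro n m
          split_ifs with h
          · subst h; simp
          · exact hW n m
      · rw [pW_bracket W α hW]
        refine Submodule.subset_span ⟨_, _, ?_, idx_add hr hs h2 h4 hij, rfl⟩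
        rw [pow_add]
        exact Dvd.dvd.mul_left (mul_dvd_mul h1 h3) _
    | zero_left y hy => simp
    | zero_right x hx => simp
    | add_left x y z _ _ _ h1 h2 =>
      convert Submodule.add_mem _ h1 h2 using 1
      noncomm_ring
    | add_right x y z _ _ _ h1 h2 =>
      convert Submodule.add_mem _ h1 h2 using 1
      noncomm_ring
    | smul_left c x y _ _ h =>
      convert Submodule.smul_mem _ c h using 1
      rw [smul_sub, smul_mul_assoc, mul_smul_comm]
    | smul_right c x y _ _ h =>
      convert Submodule.smul_mem _ c h using 1
      rw [smul_sub, smul_mul_assoc, mul_smul_comm]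
  · intro x hx
    induction hx using Submodule.span_induction with
    | mem x hx =>
      obtain ⟨q, j, ⟨q', rfl⟩, h2, rfl⟩ := hx
      rw [pW_X_pow, map_mul, map_pow, toQ_X_pow, zero_mul]
    | zero => rfl
    | add x y _ _ hx hy => rw [hx, hy, add_zero]
    | smul c x _ hx => rw [hx, smul_zero]
  · intro x hx
    induction hx using Submodule.span_induction with
    | mem x hx =>
      obtain ⟨q, j, ⟨q', rfl⟩, h2, rfl⟩ := hx
      exact ⟨_, by rw [pW_X_pow, map_mul, pow_one]⟩
    | zero => exact ⟨0, by simp⟩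
    | add x y _ _ hx hy =>
      obtain ⟨a, rfl⟩ := hx
      obtain ⟨b, rfl⟩ := hy
      exact ⟨a + b, by rw [mul_add]⟩
    | smul c x _ hx =>
      obtain ⟨a, rfl⟩ := hx
      exact ⟨c • a, by rw [mul_smul_comm]⟩

theorem extract (W : ℕ → D) (m₀ k r : ℕ) (x : RingQuot (lamRel D m₀))
    (hx : x ∈ FF W m₀ k r) :
    ∃ (q : ℕ → ℝ[X]) (J : ℕ), (∀ j, X ^ r ∣ q j) ∧ (∀ j, j < idx k r → q j = 0) ∧
      ∀ K, J ≤ K → x = toQ m₀ (∑ j ∈ Finset.range (K + 1), pW W (q j) j) := by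
  letI := ratAlg (D := D) m₀
  induction hx using Submodule.span_induction with
  | mem x hx =>
    obtain ⟨q, i, h1, h2, rfl⟩ := hx
    refine ⟨fun j => if j = i then q else 0, i, ?_, ?_, ?_⟩
    · intro j
      dsimp only
      split_ifs
      · exact h1
      · exact dvd_zero _
    · intro j hj
      exact if_neg (by omega)
    · intro K hK
      rw [Finset.sum_eq_single i]
      · simp
      · intro b _ hb
        simp only [if_neg hb, pW_zero]
      · intro h
        exact absurd (Finset.mem_range.2 (by omega)) h
  | zero => exact ⟨0, 0, by simp, by simp, by simp [pW_zero]⟩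
  | add x y _ _ hx hy =>
    obtain ⟨q, J, h1, h2, h3⟩ := hx
    obtain ⟨q', J', h1', h2', h3'⟩ := hy
    refine ⟨q + q', max J J', fun j => dvd_add (h1 j) (h1' j), ?_, ?_⟩
    · intro j hj
      rw [Pi.add_apply, h2 j hj, h2' j hj, add_zero]
    · intro K hK
      rw [h3 K (by omega), h3' K (by omega), ← map_add, ← Finset.sum_add_distrib]
      simp [pW_add]
  | smul c x _ hx =>
    obtain ⟨q, J, h1, h2, h3⟩ := hx
    refine ⟨fun j => C (c : ℝ) * q j, J, fun j => Dvd.dvd.mul_left (h1 j) _, ?_, ?_⟩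
    · intro j hj
      simp only [h2 j hj, mul_zero]
    · intro K hK
      rw [h3 K hK, ratAlg_smul, Finset.mul_sum]
      simp only [pW, Polynomial.map_mul, map_C, mul_assoc]

end
end WZ

/-- Zassenhaus-type splitting under the Witt condition: for
`u = ∑_{i=k}^{ℓ} p_i·W_i` with `p_i(0) = 0`, there are `u_2, …, u_{m₀}`, where `u_r` is a
finite sum `∑_j q_{r,j}·W_j` with `λ^r ∣ q_{r,j}` and `q_{r,j} = 0` unless `j ≥ rk+1`,
such that `exp(u) = exp(p_k·W_k)⋯exp(p_ℓ·W_ℓ)·exp(u_2)⋯exp(u_{m₀})` in `Q`. -/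
theorem witt_zassenhaus_splitting {D : Type*} [Ring D] [Algebra ℝ D]
    (W : ℕ → D) (α : ℕ → ℕ → ℝ)
    (hW : ∀ n m : ℕ, W n * W m - W m * W n = α n m • W (n + m))
    (m₀ : ℕ) (hm₀ : 1 ≤ m₀) (k ℓ : ℕ) (hkl : k ≤ ℓ)
    (p : ℕ → Polynomial ℝ) (hp : ∀ i, (p i).eval 0 = 0) :
    ∃ (J : ℕ) (q : ℕ → ℕ → Polynomial ℝ),
      (∀ r j, X ^ r ∣ q r j) ∧
      (∀ r j, j < r * k + 1 → q r j = 0) ∧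
      expQ (toQ m₀ (∑ i ∈ Finset.Icc k ℓ, pW W (p i) i)) =
        ((List.range' k (ℓ + 1 - k)).map fun i => expQ (toQ m₀ (pW W (p i) i))).prod *
        ((List.range' 2 (m₀ - 1)).map fun r =>
          expQ (toQ m₀ (∑ j ∈ Finset.range (J + 1), pW W (q r j) j))).prod := by
  letI := WZ.ratAlg (D := D) m₀
  have H := WZ.filt W α hW m₀ k
  let l := (List.range' k (ℓ + 1 - k)).map fun i => toQ m₀ (pW W (p i) i)
  have hl : ∀ x ∈ l, x ∈ WZ.FF W m₀ k 1 := by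
    intro x hx
    obtain ⟨i, hi, rfl⟩ := List.mem_map.1 hx
    refine Submodule.subset_span ⟨p i, i, ?_, ?_, rfl⟩
    · rw [pow_one, X_dvd_iff, coeff_zero_eq_eval_zero]
      exact hp i
    · have := List.mem_range'_1.1 hi
      simpa [WZ.idx] using this.1
  have hsum : l.sum = toQ m₀ (∑ i ∈ Finset.Icc k ℓ, pW W (p i) i) := by
    have h1 : l = ((List.range' k (ℓ + 1 - k)).map fun i => pW W (p i) i).map (toQ m₀) := by
      simp [l, List.map_map, Function.comp_def]
    rw [h1, ← map_list_sum]
    rfl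
  obtain ⟨y, hy, he⟩ := H.main hm₀ l hl
  have hF : ∀ s, 1 ≤ s → ∀ x ∈ WZ.FF W m₀ k s, IsNilpotent.exp x = expQ x := fun s hs x hx =>
    WZ.expQ_eq m₀ x (H.nilp (H.le le_rfl hs hx))
  have hex : ∀ r, ∃ (q : ℕ → Polynomial ℝ) (J : ℕ), (∀ j, X ^ r ∣ q j) ∧
      (∀ j, j < r * k + 1 → q j = 0) ∧
      ∀ K, J ≤ K → 2 ≤ r → y r = toQ m₀ (∑ j ∈ Finset.range (K + 1), pW W (q j) j) := by
    intro r
    by_cases hr : 2 ≤ r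
    · obtain ⟨q, J, h1, h2, h3⟩ := WZ.extract W m₀ k r _ (hy r hr)
      refine ⟨q, J, h1, fun j hj => h2 j ?_, fun K hK _ => h3 K hK⟩
      rw [WZ.idx, if_neg (by omega)]
      exact hj
    · exact ⟨0, 0, by simp, by simp, fun _ _ h => absurd h hr⟩
  choose q J h1 h2 h3 using hex
  refine ⟨(Finset.range (m₀ + 1)).sup J, q, h1, h2, ?_⟩
  rw [← hsum, ← hF 1 le_rfl _ (list_sum_mem hl), he]
  congr 2
  · simp only [l, List.map_map]
    refine List.map_congr_left fun i hi => ?_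
    exact hF 1 le_rfl _ (hl _ (List.mem_map.2 ⟨i, hi, rfl⟩))
  · refine List.map_congr_left fun r hr => ?_
    have hr' := List.mem_range'_1.1 hr
    rw [hF r (by omega) _ (hy r hr'.1), ← h3 r _ (Finset.le_sup (Finset.mem_range.2 (by omega)))
      hr'.1]
end

section
/- Let k ≤ ℓ be natural numbers and let p_k, p_{k+1}, …, p_ℓ ∈ ℝ[λ] satisfy p_i(0) = 0, and set u = ∑_{i=k}^{ℓ} p_i·W_i ∈ Q. Then there exist N ∈ ℕ, polynomials q_1, …, q_N ∈ ℝ[λ] with q_j(0) = 0, and indices i_1, …, i_N ∈ ℕ with i_j ≥ k for all j, such that exp(u) = exp(q_1·W_{i_1})·exp(q_2·W_{i_2})⋯exp(q_N·W_{i_N}) holds in Q. -/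
open Polynomial

section Generic

open IsNilpotent in
theorem conj_exp_aux {A : Type*} [Ring A] [Algebra ℚ A] (y a : A) (hy : IsNilpotent y) :
    ∃ K : ℕ, exp y * a * exp (-y) = ∑ n ∈ Finset.range (K + 1), (n.factorial : ℚ)⁻¹ •
      ((fun b => y * b - b * y)^[n] a) := by
  have hL : IsNilpotent (LinearMap.mulLeft ℚ y) := by
    obtain ⟨n, hn⟩ := hy
    exact ⟨n, by rw [LinearMap.pow_mulLeft, hn, LinearMap.mulLeft_zero_eq_zero]⟩
  have hR : IsNilpotent (LinearMap.mulRight ℚ (-y)) := by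
    obtain ⟨n, hn⟩ := hy.neg
    exact ⟨n, by rw [LinearMap.pow_mulRight, hn, LinearMap.mulRight_zero_eq_zero]⟩
  have hc : Commute (LinearMap.mulLeft ℚ y) (LinearMap.mulRight ℚ (-y)) :=
    LinearMap.commute_mulLeft_right _ _
  have h1 : ∀ m : A, exp (LinearMap.mulLeft ℚ y) m = exp y * m := by
    intro m
    obtain ⟨n, hn⟩ := hy
    have : (LinearMap.mulLeft ℚ y) ^ n = 0 := by
      rw [LinearMap.pow_mulLeft, hn, LinearMap.mulLeft_zero_eq_zero]
    rw [exp_eq_sum this, exp_eq_sum hn]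
    simp [LinearMap.pow_mulLeft, Finset.sum_mul]
  have h2 : ∀ m : A, exp (LinearMap.mulRight ℚ (-y)) m = m * exp (-y) := by
    intro m
    obtain ⟨n, hn⟩ := hy.neg
    have : (LinearMap.mulRight ℚ (-y)) ^ n = 0 := by
      rw [LinearMap.pow_mulRight, hn, LinearMap.mulRight_zero_eq_zero]
    rw [exp_eq_sum this, exp_eq_sum hn]
    simp [LinearMap.pow_mulRight, Finset.mul_sum]
  have hs := exp_add_of_commute hc hL hR
  obtain ⟨K, hK⟩ := hc.isNilpotent_add hL hR
  refine ⟨K, ?_⟩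
  have hK' := pow_succ' (LinearMap.mulLeft ℚ y + LinearMap.mulRight ℚ (-y)) K
  rw [hK, mul_zero] at hK'
  have := congrArg (fun f => f a) hs
  simp only [Module.End.mul_apply, h1, h2] at this
  rw [mul_assoc, ← this, exp_eq_sum hK', LinearMap.sum_apply]
  refine Finset.sum_congr rfl fun n _ => ?_
  rw [LinearMap.smul_apply, Module.End.pow_apply]
  congr 2
  ext b
  simp [sub_eq_add_neg]

open IsNilpotent in
theorem deriv_exp_aux {A : Type*} [Ring A] [Algebra ℚ A] (δ : A →+ A)
    (hδ : ∀ a b, δ (a * b) = δ a * b + a * δ b) (y : A) (hy : IsNilpotent y)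
    (hc : Commute (δ y) y) : δ (exp y) = δ y * exp y := by
  have hp : ∀ n : ℕ, δ (y ^ (n + 1)) = ((n + 1 : ℕ) : ℚ) • (δ y * y ^ n) := by
    intro n
    induction n with
    | zero => simp
    | succ n ih =>
      rw [_root_.pow_succ, hδ, ih, smul_mul_assoc, mul_assoc, ← _root_.pow_succ, ← (hc.pow_right (n + 1)).eq]
      rw [Nat.cast_succ (n + 1), add_smul, one_smul]
  have h1 : δ 1 = 0 := by
    have := hδ 1 1
    simpa using this
  obtain ⟨K, hK⟩ := hy
  have hK' : y ^ (K + 1) = 0 := by rw [_root_.pow_succ, hK, zero_mul]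
  conv_lhs => rw [exp_eq_sum hK']
  rw [exp_eq_sum hK, Finset.sum_range_succ', map_add, map_sum, Finset.mul_sum]
  have h0 : δ (((0).factorial : ℚ)⁻¹ • y ^ 0) = 0 := by simp [h1]
  rw [h0, add_zero]
  refine Finset.sum_congr rfl fun n _ => ?_
  rw [map_rat_smul, hp, smul_smul, mul_smul_comm]
  congr 1
  rw [Nat.factorial_succ]
  push_cast
  have : (n.factorial : ℚ) ≠ 0 := by positivity
  field_simp

open IsNilpotent in
theorem generic_aux {B A Q : Type*} [CommRing B] [Ring A] [Ring Q] [Algebra ℚ B] [Algebra ℚ A]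
    [Algebra ℚ Q] [Algebra B A]
    (ε : A →+* Q) (δ : A →+ A) (hδ : ∀ a b, δ (a * b) = δ a * b + a * δ b)
    (hconst : ∀ g, δ g = 0 → ε g = 1 → g = 1)
    (M : ℕ) (x : B) (hx : ∀ a : A, x ^ M • a = 0) (w : ℕ → A) (α : ℕ → ℕ → B)
    (hw : ∀ n m, w n * w m - w m * w n = α n m • w (n + m))
    (hint : ∀ (r : ℕ) (c : B), ∃ c' : B, ∀ i, δ ((x ^ r * c') • w i) = (x ^ r * c) • w i ∧
      ε ((x ^ r * c') • w i) = 0) (k : ℕ)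
    (z : A) (hz : z ∈ Submodule.span B (w '' Set.Ici k)) (g : A) (hg : ε g = 1)
    (hgz : δ g = (x • z) * g) :
    g ∈ Submonoid.closure {h : A | ∃ (c : B) (i : ℕ), k ≤ i ∧ h = exp ((x * c) • w i)} := by
  set L := Submodule.span B (w '' Set.Ici k) with hLdef
  set G := Submonoid.closure {h : A | ∃ (c : B) (i : ℕ), k ≤ i ∧ h = exp ((x * c) • w i)} with hG
  have hwL : ∀ i, k ≤ i → w i ∈ L := fun i hi => Submodule.subset_span ⟨i, hi, rfl⟩
  have hbr : ∀ i, k ≤ i → ∀ a ∈ L, w i * a - a * w i ∈ L := by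
    intro i hi a ha
    induction ha using Submodule.span_induction with
    | mem a ha =>
      obtain ⟨j, hj, rfl⟩ := ha
      rw [hw]
      exact L.smul_mem _ (hwL _ (by omega))
    | zero => simp
    | add a b _ _ iha ihb =>
      have : w i * (a + b) - (a + b) * w i = (w i * a - a * w i) + (w i * b - b * w i) := by
        noncomm_ring
      rw [this]; exact L.add_mem iha ihb
    | smul c a _ ih =>
      rw [mul_smul_comm, smul_mul_assoc, ← smul_sub]; exact L.smul_mem _ ih
  have hnil : ∀ (c : B) (i : ℕ), IsNilpotent ((x * c) • w i) := by
    intro c i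
    refine ⟨M, ?_⟩
    rw [_root_.smul_pow, mul_pow, mul_smul, hx]
  have hrat : ∀ (q : ℚ) (a : A), a ∈ L → q • a ∈ L := by
    intro q a ha
    rw [← algebraMap_smul B q a]
    exact L.smul_mem _ ha
  have hsc : ∀ (q : ℚ) (b : B) (a : A), q • b • a = b • q • a := by
    intro q b a
    rw [← algebraMap_smul B q (b • a), ← algebraMap_smul B q a, smul_comm]
  have hconj : ∀ (r : ℕ) (c : B) (i : ℕ), k ≤ i → ∀ a ∈ L, ∃ b ∈ L,
      exp (-((x * c) • w i)) * (x ^ r • a) * exp ((x * c) • w i) = x ^ r • a + x ^ (r + 1) • b := by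
    intro r c i hi a ha
    obtain ⟨K, hK⟩ := conj_exp_aux (-((x * c) • w i)) (x ^ r • a) (hnil c i).neg
    rw [neg_neg] at hK
    rw [hK, Finset.sum_range_succ']
    have key : ∀ n : ℕ, ∃ b ∈ L, (fun b => -((x * c) • w i) * b - b * -((x * c) • w i))^[n + 1]
        (x ^ r • a) = x ^ (r + 1) • b := by
      have step : ∀ b : A, -((x * c) • w i) * b - b * -((x * c) • w i)
          = x • (-c) • (w i * b - b * w i) := by
        intro b
        rw [neg_mul, mul_neg, smul_mul_assoc, mul_smul_comm, mul_smul, mul_smul, neg_smul, smul_neg,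
          smul_sub, smul_sub]
        abel
      intro n
      induction n with
      | zero =>
        refine ⟨(-c) • (w i * a - a * w i), L.smul_mem _ (hbr i hi a ha), ?_⟩
        simp only [zero_add, Function.iterate_one]
        rw [step, mul_smul_comm, smul_mul_assoc, ← smul_sub, pow_succ', mul_smul,
          smul_comm (-c) (x ^ r)]
      | succ n ih =>
        obtain ⟨b, hb, h⟩ := ih
        refine ⟨x • (-c) • (w i * b - b * w i),
          L.smul_mem _ (L.smul_mem _ (hbr i hi b hb)), ?_⟩
        rw [Function.iterate_succ_apply', h]
        rw [step, mul_smul_comm, smul_mul_assoc, ← smul_sub, smul_comm (-c) (x ^ (r + 1)),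
          smul_comm x (x ^ (r + 1))]
    choose b hb hbe using key
    refine ⟨∑ n ∈ Finset.range K, ((n + 1).factorial : ℚ)⁻¹ • b n,
      L.sum_mem fun n _ => hrat _ _ (hb n), ?_⟩
    rw [add_comm, Finset.smul_sum]
    congr 1
    · simp
    · refine Finset.sum_congr rfl fun n _ => ?_
      rw [hbe, hsc]
  have hlist : ∀ z ∈ L, ∃ l : List (B × ℕ), (∀ e ∈ l, k ≤ e.2) ∧
      z = (l.map fun e => e.1 • w e.2).sum := by
    intro z hz
    induction hz using Submodule.span_induction with
    | mem a ha =>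
      obtain ⟨j, hj, rfl⟩ := ha
      exact ⟨[(1, j)], by simpa using hj, by simp⟩
    | zero => exact ⟨[], by simp, by simp⟩
    | add a b _ _ iha ihb =>
      obtain ⟨l, hl, rfl⟩ := iha
      obtain ⟨l', hl', rfl⟩ := ihb
      refine ⟨l ++ l', ?_, by simp⟩
      intro e he
      rcases List.mem_append.1 he with h | h
      · exact hl e h
      · exact hl' e h
    | smul c a _ ih =>
      obtain ⟨l, hl, rfl⟩ := ih
      refine ⟨l.map fun e => (c * e.1, e.2), ?_, ?_⟩
      · intro e he
        obtain ⟨e', he', rfl⟩ := List.mem_map.1 he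
        exact hl e' he'
      · rw [List.smul_sum, List.map_map, List.map_map]
        simp [Function.comp_def, mul_smul]
  have hsumL : ∀ l : List (B × ℕ), (∀ e ∈ l, k ≤ e.2) → (l.map fun e => e.1 • w e.2).sum ∈ L := by
    intro l hl
    refine L.toAddSubmonoid.list_sum_mem ?_
    intro a ha
    obtain ⟨e, he, rfl⟩ := List.mem_map.1 ha
    exact L.smul_mem _ (hwL _ (hl e he))
  -- main induction
  have main : ∀ s : ℕ, ∀ r, 1 ≤ r → r + s = M + 1 → ∀ z ∈ L, ∀ g : A, ε g = 1 →
      δ g = (x ^ r • z) * g → g ∈ G := by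
    intro s
    induction s with
    | zero =>
      intro r _ hr z hz g hg h
      have : g = 1 := by
        refine hconst g ?_ hg
        rw [h, show r = M + 1 by omega, _root_.pow_succ, mul_smul, hx, zero_mul]
      rw [this]; exact G.one_mem
    | succ s ih =>
      intro r hr1 hr z hz
      have inner : ∀ l : List (B × ℕ), (∀ e ∈ l, k ≤ e.2) → ∀ z₂ ∈ L, ∀ g : A, ε g = 1 →
          δ g = (x ^ r • (l.map fun e => e.1 • w e.2).sum + x ^ (r + 1) • z₂) * g → g ∈ G := by
        intro l
        induction l with
        | nil =>
          intro _ z₂ hz₂ g hg h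
          refine ih (r + 1) (by omega) (by omega) z₂ hz₂ g hg ?_
          simpa using h
        | cons e l ihl =>
          intro hl z₂ hz₂ g hg h
          obtain ⟨c, i⟩ := e
          have hi : k ≤ i := hl (c, i) (by simp)
          have hl' : ∀ e ∈ l, k ≤ e.2 := fun e he => hl e (by simp [he])
          obtain ⟨c', hc'⟩ := hint r c
          obtain ⟨hc1, hc2⟩ := hc' i
          set d : B := x ^ (r - 1) * c' with hd
          have hxd : x ^ r * c' = x * d := by
            rw [hd, ← mul_assoc, ← pow_succ', Nat.sub_add_cancel hr1]
          rw [hxd] at hc1 hc2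
          set y : A := (x * d) • w i with hy
          have hyn : IsNilpotent y := hnil d i
          have hcomm : Commute (δ (-y)) (-y) := by
            rw [map_neg, hc1, hy]
            exact (((Commute.refl (w i)).smul_left _).smul_right _).neg_left.neg_right
          have hder := deriv_exp_aux δ hδ (-y) hyn.neg hcomm
          rw [map_neg, hc1] at hder
          have hinv : exp y * exp (-y) = 1 := exp_mul_exp_neg_self hyn
          set S := (l.map fun e => e.1 • w e.2).sum with hS
          have hSL : S ∈ L := hsumL l hl'
          obtain ⟨b₁, hb₁, he₁⟩ := hconj r d i hi (c • w i + S)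
            (L.add_mem (L.smul_mem _ (hwL i hi)) hSL)
          obtain ⟨b₂, hb₂, he₂⟩ := hconj (r + 1) d i hi z₂ hz₂
          rw [← hy] at he₁ he₂
          have hg1 : exp (-y) * g ∈ G := by
            refine ihl hl' (b₁ + z₂ + x • b₂) (L.add_mem (L.add_mem hb₁ hz₂) (L.smul_mem _ hb₂))
              _ ?_ ?_
            · rw [map_mul, hg, mul_one, map_exp hyn.neg, map_neg, hc2, neg_zero, exp_zero]
            · rw [hδ, hder, h]
              have e1 : exp (-y) * ((x ^ r • (List.map (fun e => e.1 • w e.2) ((c, i) :: l)).sum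
                  + x ^ (r + 1) • z₂) * g)
                  = (exp (-y) * (x ^ r • (c • w i + S)) * exp y
                    + exp (-y) * (x ^ (r + 1) • z₂) * exp y) * (exp (-y) * g) := by
                have : ∀ a : A, a * exp y * (exp (-y) * g) = a * g := by
                  intro a
                  rw [mul_assoc, ← mul_assoc (exp y), hinv, one_mul]
                rw [add_mul (exp (-y) * _ * _), this, this, List.map_cons, List.sum_cons, ← add_mul,
                  ← mul_add, mul_assoc]
              rw [e1, he₁, he₂, mul_assoc, ← add_mul]
              congr 1
              rw [smul_add, smul_add, smul_add, _root_.pow_succ x (r + 1), mul_smul (x ^ (r + 1)),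
                mul_smul (x ^ r)]
              abel
          have : g = exp y * (exp (-y) * g) := by rw [← mul_assoc, hinv, one_mul]
          rw [this]
          exact G.mul_mem (Submonoid.subset_closure ⟨d, i, hi, rfl⟩) hg1
      intro g hg h
      obtain ⟨l, hl, rfl⟩ := hlist z hz
      exact inner l hl 0 L.zero_mem g hg (by simpa using h)
  exact main M 1 le_rfl (by omega) z hz g hg (by simpa using hgz)

end Generic

theorem central_map_aux {R S : Type*} [CommRing R] [Ring S] (f : R →+* S)
    (hf : ∀ r s, f r * s = s * f r) (b : R[X]) (a : S[X]) : b.map f * a = a * b.map f := by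
  induction b using Polynomial.induction_on' with
  | add p q hp hq => rw [Polynomial.map_add, add_mul, mul_add, hp, hq]
  | monomial n r =>
    rw [map_monomial]
    induction a using Polynomial.induction_on' with
    | add p q hp hq => rw [add_mul, mul_add, hp, hq]
    | monomial m s => rw [monomial_mul_monomial, monomial_mul_monomial, hf, add_comm]

theorem antideriv_aux (c : ℝ[X][X]) : ∃ c' : ℝ[X][X], derivative c' = c ∧ c'.coeff 0 = 0 := by
  induction c using Polynomial.induction_on' with
  | add p q hp hq =>
    obtain ⟨p', h1, h2⟩ := hp
    obtain ⟨q', h3, h4⟩ := hq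
    exact ⟨p' + q', by rw [derivative_add, h1, h3], by rw [coeff_add, h2, h4, add_zero]⟩
  | monomial n a =>
    refine ⟨monomial (n + 1) (a * C ((n + 1 : ℝ)⁻¹)), ?_, ?_⟩
    · rw [derivative_monomial, Nat.add_sub_cancel]
      congr 1
      have h : ((n + 1 : ℕ) : ℝ[X]) = C ((n : ℝ) + 1) := by simp
      have h' : (n : ℝ) + 1 ≠ 0 := by positivity
      rw [h, mul_assoc, ← C_mul, inv_mul_cancel₀ h', C_1, mul_one]
    · rw [coeff_monomial]; simp

set_option maxHeartbeats 2000000 in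
/-- Under the Witt condition, the exponential of `u = ∑_{i=k}^{ℓ} p_i·W_i` (with
`p_i(0) = 0`) decomposes in `Q` into a finite product of exponentials of single terms
`q_j·W_{i_j}` with `q_j(0) = 0` and `i_j ≥ k`. -/
theorem witt_exp_decomposition {D : Type*} [Ring D] [Algebra ℝ D]
    (W : ℕ → D) (α : ℕ → ℕ → ℝ)
    (hW : ∀ n m : ℕ, W n * W m - W m * W n = α n m • W (n + m))
    (m₀ : ℕ) (hm₀ : 1 ≤ m₀) (k ℓ : ℕ) (hkl : k ≤ ℓ)
    (p : ℕ → Polynomial ℝ) (hp : ∀ i, (p i).eval 0 = 0) :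
    ∃ (N : ℕ) (q : ℕ → Polynomial ℝ) (idx : ℕ → ℕ),
      (∀ j, (q j).eval 0 = 0) ∧
      (∀ j, k ≤ idx j) ∧
      expQ (toQ m₀ (∑ i ∈ Finset.Icc k ℓ, pW W (p i) i)) =
        ((List.range N).map fun j => expQ (toQ m₀ (pW W (q j) (idx j)))).prod := by
  classical
  let : Algebra ℚ D := Algebra.compHom D (algebraMap ℚ ℝ)
  let φ : ℝ[X] →+* RingQuot (lamRel D m₀) := (toQ m₀).comp (mapRingHom (algebraMap ℝ D))
  have hsurj : Function.Surjective (toQ (D := D) m₀) := RingQuot.mkRingHom_surjective _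
  have hcoe : ∀ (b : ℝ[X]) (a : D[X]), b.map (algebraMap ℝ D) * a = a * b.map (algebraMap ℝ D) :=
    central_map_aux (algebraMap ℝ D) Algebra.commutes
  have hφ : ∀ (b : ℝ[X]) (a : RingQuot (lamRel D m₀)), φ b * a = a * φ b := by
    intro b a
    obtain ⟨a, rfl⟩ := hsurj a
    change toQ m₀ (b.map _) * toQ m₀ a = toQ m₀ a * toQ m₀ (b.map _)
    rw [← map_mul, ← map_mul, hcoe]
  let ψ : ℝ[X][X] →+* (RingQuot (lamRel D m₀))[X] := mapRingHom φ
  have hψ : ∀ b a, ψ b * a = a * ψ b := central_map_aux φ hφ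
  let : Algebra ℝ[X][X] (RingQuot (lamRel D m₀))[X] := ψ.toAlgebra' hψ
  have hsm : ∀ (b : ℝ[X][X]) (a : (RingQuot (lamRel D m₀))[X]), b • a = ψ b * a := fun _ _ => rfl
  let ω : ℕ → RingQuot (lamRel D m₀) := fun i => toQ m₀ (C (W i))
  have hpW : ∀ q i, toQ m₀ (pW W q i) = φ q * ω i := by
    intro q i
    simp [pW, φ, ω]
  have hφX : φ (X ^ (m₀ + 1)) = 0 := by
    have : φ (X ^ (m₀ + 1)) = toQ m₀ (X ^ (m₀ + 1)) := by simp [φ]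
    rw [this, ← map_zero (toQ (D := D) m₀)]
    exact RingQuot.mkRingHom_rel ⟨rfl, rfl⟩
  have hnil : ∀ (q : ℝ[X]) v, (φ (X * q) * v) ^ (m₀ + 1) = 0 := by
    intro q v
    have : Commute (φ (X * q)) v := hφ _ _
    rw [this.mul_pow, ← map_pow, mul_pow, map_mul, hφX, zero_mul, zero_mul]
  have hexp : ∀ y : RingQuot (lamRel D m₀), y ^ (m₀ + 1) = 0 → expQ y = IsNilpotent.exp y := by
    intro y hy
    rw [IsNilpotent.exp_eq_sum hy, expQ]
    exact Finset.sum_congr rfl fun n _ => inv_natCast_smul_eq ℝ ℚ _ _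
  have hdiv : ∀ i, ∃ q, p i = X * q := fun i => by
    have : (X : ℝ[X]) ∣ p i := by
      rw [X_dvd_iff, coeff_zero_eq_eval_zero, hp]
    exact this
  choose p' hp' using hdiv
  have hu : toQ m₀ (∑ i ∈ Finset.Icc k ℓ, pW W (p i) i)
      = φ (X * 1) * ∑ i ∈ Finset.Icc k ℓ, φ (p' i) * ω i := by
    rw [map_sum, Finset.mul_sum]
    refine Finset.sum_congr rfl fun i _ => ?_
    rw [hpW, hp', map_mul, mul_one, mul_assoc]
  set u := toQ m₀ (∑ i ∈ Finset.Icc k ℓ, pW W (p i) i) with hudef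
  have hun : u ^ (m₀ + 1) = 0 := by rw [hu]; exact hnil _ _
  have hXu : IsNilpotent (X * C u) := by
    refine ⟨m₀ + 1, ?_⟩
    rw [(commute_X (C u)).mul_pow, ← C_pow, hun, C_0, mul_zero]
  have hδ : ∀ a b : (RingQuot (lamRel D m₀))[X],
      (derivative.toAddMonoidHom) (a * b) = derivative.toAddMonoidHom a * b
        + a * derivative.toAddMonoidHom b := fun a b => derivative_mul
  have hmem := generic_aux (B := ℝ[X][X]) (A := (RingQuot (lamRel D m₀))[X])
    (Q := RingQuot (lamRel D m₀)) constantCoeff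
    derivative.toAddMonoidHom hδ
    (by
      intro g hg h1
      have hg : derivative g = 0 := hg
      have h1 : g.coeff 0 = 1 := h1
      ext n
      cases n with
      | zero => simp [h1]
      | succ n =>
        have := congrArg (fun f => coeff f n) hg
        simp only [coeff_derivative, coeff_zero] at this
        have h2 : ((n + 1 : ℕ) : ℚ) • g.coeff (n + 1) = 0 := by
          rw [Algebra.smul_def, Algebra.commutes]
          simpa using this
        have h3 : g.coeff (n + 1) = 0 :=
          (smul_eq_zero_iff_right (by positivity : ((n + 1 : ℕ) : ℚ) ≠ 0)).1 h2
        rw [h3, coeff_one]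
        simp)
    (m₀ + 1) (C X)
    (by
      intro a
      rw [hsm, ← C_pow]
      have : ψ (C (X ^ (m₀ + 1))) = C (φ (X ^ (m₀ + 1))) := by simp [ψ]
      rw [this, hφX, C_0, zero_mul])
    (fun i => C (ω i)) (fun n m => C (C (α n m)))
    (by
      intro n m
      rw [hsm, ← C_mul, ← C_mul, ← C_sub]
      have : ψ (C (C (α n m))) = C (φ (C (α n m))) := by simp [ψ]
      rw [this, ← C_mul]
      congr 1
      have h2 : φ (C (α n m)) = toQ m₀ (C (algebraMap ℝ D (α n m))) := by simp [φ]
      rw [h2]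
      change toQ m₀ (C (W n)) * toQ m₀ (C (W m)) - toQ m₀ (C (W m)) * toQ m₀ (C (W n)) =
        toQ m₀ (C (algebraMap ℝ D (α n m))) * toQ m₀ (C (W (n + m)))
      rw [← map_mul (toQ m₀), ← map_mul (toQ m₀), ← map_mul (toQ m₀), ← map_sub (toQ m₀),
        ← C_mul, ← C_mul, ← C_mul, ← C_sub, hW,
        Algebra.smul_def])
    (by
      intro r c
      obtain ⟨c', hc', h0⟩ := antideriv_aux c
      refine ⟨c', fun i => ⟨?_, ?_⟩⟩
      · change derivative _ = _
        rw [hsm, hsm, derivative_mul, derivative_C, mul_zero, add_zero]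
        congr 1
        change derivative (Polynomial.map φ _) = Polynomial.map φ _
        rw [derivative_map, ← C_pow, derivative_C_mul, hc']
      · rw [hsm, map_mul]
        have : constantCoeff (ψ (C X ^ r * c')) = 0 := by
          change (Polynomial.map φ _).coeff 0 = 0
          rw [coeff_map, mul_coeff_zero, h0, mul_zero, map_zero]
        rw [this, zero_mul])
    k (∑ i ∈ Finset.Icc k ℓ, (C (p' i) : ℝ[X][X]) • C (ω i))
    (by
      refine Submodule.sum_mem _ fun i hi => Submodule.smul_mem _ _ ?_
      exact Submodule.subset_span (Set.mem_image_of_mem _ (Finset.mem_Icc.1 hi).1))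
    (IsNilpotent.exp (X * C u))
    (by
      rw [IsNilpotent.map_exp hXu]
      simp)
    (by
      have hd : derivative.toAddMonoidHom (X * C u) = C u := by
        change derivative _ = _
        simp
      refine (deriv_exp_aux derivative.toAddMonoidHom hδ (X * C u) hXu ?_).trans ?_
      · rw [hd]
        exact ((commute_X (C u)).symm).mul_right (Commute.refl _)
      · rw [hd]
        congr 1
        rw [hu, hsm, C_mul, map_sum]
        simp [ψ, hsm])
  let ev : (RingQuot (lamRel D m₀))[X] →+* RingQuot (lamRel D m₀) :=
    eval₂RingHom' (RingHom.id _) 1 (fun a => Commute.one_right _)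
  have hevψ : ∀ b, ev (ψ b) = φ (b.eval 1) := by
    intro b
    change eval₂ _ _ (Polynomial.map φ b) = _
    rw [eval₂_map, RingHom.id_comp, eval₂_at_one]
  have hevC : ∀ a, ev (C a) = a := fun a => by
    change eval₂ _ _ _ = _
    simp
  have hlist : ∃ l : List (ℝ[X] × ℕ), (∀ e ∈ l, e.1.eval 0 = 0 ∧ k ≤ e.2) ∧
      ev (IsNilpotent.exp (X * C u)) = (l.map fun e => expQ (toQ m₀ (pW W e.1 e.2))).prod := by
    generalize IsNilpotent.exp (X * C u) = g at hmem ⊢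
    induction hmem using Submonoid.closure_induction with
    | mem h hh =>
      obtain ⟨c, i, hi, rfl⟩ := hh
      refine ⟨[(X * c.eval 1, i)], ?_, ?_⟩
      · intro e he
        rw [List.mem_singleton] at he
        subst he
        exact ⟨by simp, hi⟩
      · have hn : IsNilpotent (((C X : ℝ[X][X]) * c) • C (ω i)) := by
          refine ⟨m₀ + 1, ?_⟩
          rw [hsm]
          have : Commute (ψ (C X * c)) (C (ω i)) := hψ _ _
          rw [this.mul_pow, ← map_pow, mul_pow, ← C_pow, map_mul]
          have : ψ (C (X ^ (m₀ + 1))) = C (φ (X ^ (m₀ + 1))) := by simp [ψ]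
          rw [this, hφX, C_0, zero_mul, zero_mul]
        rw [IsNilpotent.map_exp hn, List.map_singleton, List.prod_singleton, hsm, map_mul, hevψ,
          hevC, hpW, hexp _ (hnil _ _), eval_mul, eval_C]
    | one => exact ⟨[], by simp, by simp⟩
    | mul a b _ _ iha ihb =>
      obtain ⟨l, hl, h1⟩ := iha
      obtain ⟨l', hl', h2⟩ := ihb
      refine ⟨l ++ l', ?_, by rw [map_mul, h1, h2, List.map_append, List.prod_append]⟩
      intro e he
      rcases List.mem_append.1 he with h | h
      · exact hl e h
      · exact hl' e h
  obtain ⟨l, hl, hle⟩ := hlist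
  have hgd : ∀ j, (l.getD j (0, k)).1.eval 0 = 0 ∧ k ≤ (l.getD j (0, k)).2 := by
    intro j
    by_cases hj : j < l.length
    · rw [List.getD_eq_getElem _ _ hj]
      exact hl _ (List.getElem_mem hj)
    · rw [List.getD_eq_default _ _ (by omega)]
      simp
  refine ⟨l.length, fun j => (l.getD j (0, k)).1, fun j => (l.getD j (0, k)).2,
    fun j => (hgd j).1, fun j => (hgd j).2, ?_⟩
  have hevu : ev (X * C u) = u := by
    rw [map_mul, hevC]
    change eval₂ _ _ _ * _ = _
    simp
  rw [hexp u hun]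
  rw [IsNilpotent.map_exp hXu, hevu] at hle
  rw [hle]
  congr 1
  apply List.ext_getElem
  · simp
  · intro n h1 h2
    have : n < l.length := by simpa using h1
    simp [this]
end

section
/- Let p₁, p₂ ∈ ℝ[λ] satisfy p₁(0) = p₂(0) = 0 and let k ≤ ℓ be natural numbers. Then there exist N ∈ ℕ, polynomials q_1, …, q_N ∈ ℝ[λ] with q_j(0) = 0, and indices i_1, …, i_N ∈ ℕ with i_j ≥ k + 1 for all j, such that exp(p₂·W_ℓ)·exp(p₁·W_k) = exp(p₁·W_k)·exp(p₂·W_ℓ)·exp(q_1·W_{i_1})·exp(q_2·W_{i_2})⋯exp(q_N·W_{i_N}) holds in Q. -/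
open Polynomial

/-! ### Truncated exponentials in a real algebra -/

/-- The truncated exponential in a real algebra. -/
noncomputable def rexp {A : Type*} [Ring A] [Algebra ℝ A] (M : ℕ) (u : A) : A :=
  ∑ j ∈ Finset.range M, (j.factorial : ℝ)⁻¹ • u ^ j

/-- The rational structure on a real algebra. -/
@[reducible]
noncomputable def ratMod (A : Type*) [Ring A] [Algebra ℝ A] : Module ℚ A :=
  Module.compHom A (algebraMap ℚ ℝ)

lemma rexp_eq {A : Type*} [Ring A] [Algebra ℝ A] {M : ℕ} {u : A} (h : u ^ M = 0) :
    rexp M u = @IsNilpotent.exp A _ (ratMod A) u := by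
  let _ := ratMod A
  rw [IsNilpotent.exp_eq_sum h, rexp]
  refine Finset.sum_congr rfl fun j _ => ?_
  change _ = (algebraMap ℚ ℝ ((j.factorial : ℚ)⁻¹)) • u ^ j
  simp

lemma rexp_mul_neg {A : Type*} [Ring A] [Algebra ℝ A] {M : ℕ} {u : A} (h : u ^ M = 0) :
    rexp M u * rexp M (-u) = 1 := by
  let _ := ratMod A
  have h' : (-u) ^ M = 0 := by rw [neg_pow, h, mul_zero]
  rw [rexp_eq h, rexp_eq h', IsNilpotent.exp_mul_exp_neg_self ⟨M, h⟩]

lemma rexp_neg_mul {A : Type*} [Ring A] [Algebra ℝ A] {M : ℕ} {u : A} (h : u ^ M = 0) :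
    rexp M (-u) * rexp M u = 1 := by
  let _ := ratMod A
  have h' : (-u) ^ M = 0 := by rw [neg_pow, h, mul_zero]
  rw [rexp_eq h, rexp_eq h', IsNilpotent.exp_neg_mul_exp_self ⟨M, h⟩]

lemma rexp_mulLeft {A : Type*} [Ring A] [Algebra ℝ A] (M : ℕ) (u x : A) :
    rexp M (LinearMap.mulLeft ℝ u) x = rexp M u * x := by
  simp [rexp, LinearMap.pow_mulLeft, Finset.sum_mul]

lemma rexp_mulRight {A : Type*} [Ring A] [Algebra ℝ A] (M : ℕ) (u x : A) :
    rexp M (LinearMap.mulRight ℝ u) x = x * rexp M u := by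
  simp [rexp, LinearMap.pow_mulRight, Finset.mul_sum]

lemma rexp_commute {A : Type*} [Ring A] [Algebra ℝ A] (M : ℕ) {u v : A} (h : Commute u v) :
    Commute (rexp M u) (rexp M v) := by
  refine Commute.sum_left _ _ _ fun i _ => Commute.sum_right _ _ _ fun j _ => ?_
  exact ((h.pow_pow i j).smul_left _).smul_right _

lemma rexp_conj_sub_mem {A : Type*} [Ring A] [Algebra ℝ A] {M : ℕ} {v : A} (h : v ^ M = 0)
    (L : Submodule ℝ A) (hL : ∀ x ∈ L, v * x - x * v ∈ L) (x : A) (hx : v * x - x * v ∈ L) :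
    rexp M (-v) * x * rexp M v - x ∈ L := by
  have h' : (-v) ^ M = 0 := by rw [neg_pow, h, mul_zero]
  set l : Module.End ℝ A := LinearMap.mulLeft ℝ (-v) with hl
  set r : Module.End ℝ A := LinearMap.mulRight ℝ v with hr
  have hl0 : l ^ M = 0 := by rw [hl, LinearMap.pow_mulLeft, h']; simp
  have hr0 : r ^ M = 0 := by rw [hr, LinearMap.pow_mulRight, h]; simp
  have hc : Commute l r := LinearMap.commute_mulLeft_right (R := ℝ) (-v) v
  obtain ⟨K, hK⟩ := hc.isNilpotent_add ⟨M, hl0⟩ ⟨M, hr0⟩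
  have key : rexp (K + 1) (l + r) = rexp M l * rexp M r := by
    let _ := ratMod (Module.End ℝ A)
    rw [rexp_eq hl0, rexp_eq hr0, rexp_eq (by rw [pow_succ, hK, zero_mul]),
      IsNilpotent.exp_add_of_commute hc ⟨M, hl0⟩ ⟨M, hr0⟩]
  have e : rexp M (-v) * x * rexp M v = rexp (K + 1) (l + r) x := by
    rw [key, Module.End.mul_apply, hr, hl, rexp_mulRight, rexp_mulLeft, mul_assoc]
  have hlr : ∀ y, (l + r) y = -(v * y - y * v) := by
    intro y; simp [hl, hr]; abel
  have hp : ∀ j, ((l + r) ^ (j + 1)) x ∈ L := by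
    intro j
    induction j with
    | zero => rw [zero_add, pow_one, hlr]; exact L.neg_mem hx
    | succ j ih => rw [pow_succ', Module.End.mul_apply, hlr]; exact L.neg_mem (hL _ ih)
  rw [e, rexp, Finset.sum_range_succ']
  simp only [LinearMap.add_apply, LinearMap.sum_apply, LinearMap.smul_apply]
  simp only [Nat.factorial_zero, Nat.cast_one, inv_one, pow_zero, one_smul, Module.End.one_apply,
    add_sub_cancel_right]
  exact L.sum_mem fun j _ => L.smul_mem _ (hp j)

lemma der_pow {A : Type*} [Ring A] [Algebra ℝ A] (E : A →ₗ[ℝ] A)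
    (hE : ∀ x y, E (x * y) = E x * y + x * E y) {v : A} (hc : Commute v (E v)) (j : ℕ) :
    E (v ^ (j + 1)) = ((j + 1 : ℕ) : ℝ) • (v ^ j * E v) := by
  induction j with
  | zero => simp
  | succ j ih =>
    rw [pow_succ, hE, ih, smul_mul_assoc, mul_assoc, ← hc.eq, ← mul_assoc, ← pow_succ]
    push_cast
    module

lemma der_rexp {A : Type*} [Ring A] [Algebra ℝ A] (E : A →ₗ[ℝ] A)
    (hE : ∀ x y, E (x * y) = E x * y + x * E y) {v : A} (hc : Commute v (E v)) {m : ℕ}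
    (h : v ^ (m + 1) = 0) :
    E (rexp (m + 1) v) = rexp (m + 1) v * E v := by
  have h1 : E 1 = 0 := by
    have := hE 1 1
    simpa using this
  have h0 : v ^ m * E v = 0 := by
    have := der_pow E hE hc m
    rw [h, map_zero] at this
    exact (smul_eq_zero.mp this.symm).resolve_left (by positivity)
  rw [rexp, Finset.sum_mul, map_sum, Finset.sum_range_succ', Finset.sum_range_succ]
  simp only [map_smul, pow_zero, h1, smul_zero, add_zero, smul_mul_assoc, h0]
  refine Finset.sum_congr rfl fun j _ => ?_
  rw [der_pow E hE hc, smul_smul]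
  congr 1
  rw [Nat.factorial_succ]
  push_cast
  field_simp

/-! ### Coefficient model of the truncated polynomial ring -/

/-- A real algebra `A` with coefficient maps to `D`, behaving like `D[λ]/(λ^{m+1})`, together with
its Euler derivation `E = λ d/dλ` and the elements `p(λ) W_i`. -/
structure TruncModel (A D : Type*) [Ring A] [Algebra ℝ A] [Ring D] [Algebra ℝ D] (W : ℕ → D)
    (m : ℕ) where
  cf : ℕ → A →ₗ[ℝ] D
  E : A →ₗ[ℝ] A
  el : ℝ[X] → ℕ → A
  cf_ext : ∀ x y : A, (∀ n ≤ m, cf n x = cf n y) → x = y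
  cf_mul : ∀ n ≤ m, ∀ x y : A, cf n (x * y) =
    ∑ ij ∈ Finset.HasAntidiagonal.antidiagonal n, cf ij.1 x * cf ij.2 y
  cf_one : ∀ n ≤ m, cf n 1 = if n = 0 then 1 else 0
  cf_E : ∀ n ≤ m, ∀ x, cf n (E x) = (n : ℝ) • cf n x
  cf_el : ∀ n ≤ m, ∀ p i, cf n (el p i) = p.coeff n • W i

namespace TruncModel

variable {A D : Type*} [Ring A] [Algebra ℝ A] [Ring D] [Algebra ℝ D] {W : ℕ → D} {m : ℕ}
  (T : TruncModel A D W m)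

lemma E_mul (x y : A) : T.E (x * y) = T.E x * y + x * T.E y := by
  refine T.cf_ext _ _ fun n hn => ?_
  rw [T.cf_E n hn, map_add, T.cf_mul n hn, T.cf_mul n hn, T.cf_mul n hn, Finset.smul_sum,
    ← Finset.sum_add_distrib]
  refine Finset.sum_congr rfl fun ij hij => ?_
  have h := Finset.HasAntidiagonal.mem_antidiagonal.mp hij
  rw [T.cf_E _ (by omega), T.cf_E _ (by omega), ← h, smul_mul_assoc, mul_smul_comm]
  push_cast
  module

lemma cf_pow {v : A} (h : T.cf 0 v = 0) (j : ℕ) : ∀ n ≤ m, n < j → T.cf n (v ^ j) = 0 := by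
  induction j with
  | zero => intro n _ h; omega
  | succ j ih =>
    intro n hn hnj
    rw [pow_succ, T.cf_mul n hn]
    refine Finset.sum_eq_zero fun ij hij => ?_
    have h' := Finset.HasAntidiagonal.mem_antidiagonal.mp hij
    by_cases h2 : ij.2 = 0
    · rw [h2, h, mul_zero]
    · rw [ih _ (by omega) (by omega), zero_mul]

lemma pow_eq_zero {v : A} (h : T.cf 0 v = 0) : v ^ (m + 1) = 0 :=
  T.cf_ext _ _ fun n hn => by rw [T.cf_pow h _ n hn (by omega), map_zero]

lemma cf_el_zero {p : ℝ[X]} (hp : p.eval 0 = 0) (i : ℕ) : T.cf 0 (T.el p i) = 0 := by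
  rw [T.cf_el _ (Nat.zero_le _), coeff_zero_eq_eval_zero, hp, zero_smul]

lemma el_pow_zero {p : ℝ[X]} (hp : p.eval 0 = 0) (i : ℕ) : T.el p i ^ (m + 1) = 0 :=
  T.pow_eq_zero (T.cf_el_zero hp i)

lemma el_comm (p q : ℝ[X]) (i : ℕ) : Commute (T.el p i) (T.el q i) := by
  refine T.cf_ext _ _ fun n hn => ?_
  rw [T.cf_mul n hn, T.cf_mul n hn, ← Finset.Nat.sum_antidiagonal_swap]
  refine Finset.sum_congr rfl fun ij hij => ?_
  have h' := Finset.HasAntidiagonal.mem_antidiagonal.mp hij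
  simp only [Prod.fst_swap, Prod.snd_swap]
  rw [T.cf_el _ (by omega), T.cf_el _ (by omega),
    smul_mul_smul_comm, smul_mul_smul_comm, mul_comm]

lemma E_el (p : ℝ[X]) (i : ℕ) : T.E (T.el p i) = T.el (X * derivative p) i := by
  refine T.cf_ext _ _ fun n hn => ?_
  rw [T.cf_E n hn, T.cf_el n hn, T.cf_el n hn, smul_smul]
  congr 1
  cases n with
  | zero => simp
  | succ n => rw [coeff_X_mul, coeff_derivative]; push_cast; ring

lemma el_neg (p : ℝ[X]) (i : ℕ) : T.el (-p) i = - T.el p i := by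
  refine T.cf_ext _ _ fun n hn => ?_
  rw [map_neg, T.cf_el n hn, T.cf_el n hn, coeff_neg, neg_smul]

/-- The exponential in the model. -/
noncomputable def ex (_ : TruncModel A D W m) (u : A) : A := rexp (m + 1) u

lemma E_ex {p : ℝ[X]} (hp : p.eval 0 = 0) (i : ℕ) :
    T.E (T.ex (T.el p i)) = T.ex (T.el p i) * T.E (T.el p i) :=
  der_rexp T.E T.E_mul (by rw [E_el]; exact T.el_comm _ _ _) (T.el_pow_zero hp i)

/-- Span of the higher generators. -/
def SS (W : ℕ → D) (k : ℕ) : Submodule ℝ D := Submodule.span ℝ {w | ∃ i, k + 1 ≤ i ∧ w = W i}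

/-- Elements all of whose coefficients are in the span of the higher generators. -/
def LL (k : ℕ) : Submodule ℝ A where
  carrier := {x | ∀ n ≤ m, T.cf n x ∈ SS W k}
  add_mem' := fun hx hy n hn => by rw [map_add]; exact (SS W k).add_mem (hx n hn) (hy n hn)
  zero_mem' := fun n _ => by rw [map_zero]; exact (SS W k).zero_mem
  smul_mem' := fun c x hx n hn => by rw [map_smul]; exact (SS W k).smul_mem _ (hx n hn)

lemma W_mem {k i : ℕ} (h : k + 1 ≤ i) : W i ∈ SS W k := Submodule.subset_span ⟨i, h, rfl⟩

lemma el_mem (k : ℕ) (p : ℝ[X]) {i : ℕ} (h : k + 1 ≤ i) : T.el p i ∈ T.LL k := by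
  intro n hn
  rw [T.cf_el n hn]
  exact (SS W k).smul_mem _ (W_mem h)

lemma brW_mem {α : ℕ → ℕ → ℝ} (hW : ∀ n m : ℕ, W n * W m - W m * W n = α n m • W (n + m))
    {k i : ℕ} (hi : k ≤ i) {w : D} (hw : w ∈ SS W k) : W i * w - w * W i ∈ SS W k := by
  induction hw using Submodule.span_induction with
  | mem x hx =>
    obtain ⟨j, hj, rfl⟩ := hx
    rw [hW]
    exact (SS W k).smul_mem _ (W_mem (by omega))
  | zero => simp
  | add x y _ _ hx hy =>
    have : W i * (x + y) - (x + y) * W i = (W i * x - x * W i) + (W i * y - y * W i) := by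
      rw [mul_add, add_mul]; abel
    rw [this]
    exact (SS W k).add_mem hx hy
  | smul c x _ hx =>
    rw [mul_smul_comm, smul_mul_assoc, ← smul_sub]
    exact (SS W k).smul_mem _ hx

lemma br_mem_aux (k i : ℕ) (p : ℝ[X]) (x : A)
    (h : ∀ n ≤ m, W i * T.cf n x - T.cf n x * W i ∈ SS W k) :
    T.el p i * x - x * T.el p i ∈ T.LL k := by
  intro n hn
  rw [map_sub, T.cf_mul n hn, T.cf_mul n hn, ← Finset.Nat.sum_antidiagonal_swap (n := n)
    (f := fun ij => T.cf ij.1 x * T.cf ij.2 (T.el p i)), ← Finset.sum_sub_distrib]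
  refine Submodule.sum_mem _ fun ij hij => ?_
  have h' := Finset.HasAntidiagonal.mem_antidiagonal.mp hij
  simp only [Prod.fst_swap, Prod.snd_swap]
  rw [T.cf_el _ (by omega), smul_mul_assoc, mul_smul_comm, ← smul_sub]
  exact Submodule.smul_mem _ _ (h _ (by omega))

lemma br_mem {α : ℕ → ℕ → ℝ} (hW : ∀ n m : ℕ, W n * W m - W m * W n = α n m • W (n + m))
    {k i : ℕ} (hi : k ≤ i) (p : ℝ[X]) {x : A} (hx : x ∈ T.LL k) :
    T.el p i * x - x * T.el p i ∈ T.LL k :=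
  T.br_mem_aux k i p x fun n hn => brW_mem hW hi (hx n hn)

lemma br_mem' {α : ℕ → ℕ → ℝ} (hW : ∀ n m : ℕ, W n * W m - W m * W n = α n m • W (n + m))
    {k i j : ℕ} (hij : k + 1 ≤ i + j) (p q : ℝ[X]) :
    T.el p i * T.el q j - T.el q j * T.el p i ∈ T.LL k :=
  T.br_mem_aux k i p _ fun n hn => by
    rw [T.cf_el n hn, mul_smul_comm, smul_mul_assoc, ← smul_sub, hW]
    exact Submodule.smul_mem _ _ (Submodule.smul_mem _ _ (W_mem hij))

lemma ex_mul_neg {p : ℝ[X]} (hp : p.eval 0 = 0) (i : ℕ) :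
    T.ex (T.el p i) * T.ex (-T.el p i) = 1 := rexp_mul_neg (T.el_pow_zero hp i)

lemma ex_neg_mul {p : ℝ[X]} (hp : p.eval 0 = 0) (i : ℕ) :
    T.ex (-T.el p i) * T.ex (T.el p i) = 1 := rexp_neg_mul (T.el_pow_zero hp i)

lemma conj_mem {α : ℕ → ℕ → ℝ} (hW : ∀ n m : ℕ, W n * W m - W m * W n = α n m • W (n + m))
    {k i : ℕ} (hi : k ≤ i) {p : ℝ[X]} (hp : p.eval 0 = 0) {x : A} (hx : x ∈ T.LL k) :
    T.ex (-T.el p i) * x * T.ex (T.el p i) ∈ T.LL k := by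
  have := rexp_conj_sub_mem (T.el_pow_zero hp i) (T.LL k) (fun y hy => T.br_mem hW hi p hy) x
    (T.br_mem hW hi p hx)
  have h2 := (T.LL k).add_mem this hx
  rwa [sub_add_cancel] at h2

/-- The generating exponentials. -/
def gens (k : ℕ) : Set A := {g | ∃ (q : ℝ[X]) (i : ℕ), q.eval 0 = 0 ∧ k + 1 ≤ i ∧
  g = T.ex (T.el q i)}

/-- Products of generating exponentials. -/
def GG (k : ℕ) : Submonoid A := Submonoid.closure (T.gens k)

lemma GG_inv {k : ℕ} {g : A} (hg : g ∈ T.GG k) : ∃ h ∈ T.GG k, g * h = 1 ∧ h * g = 1 := by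
  induction hg using Submonoid.closure_induction with
  | mem x hx =>
    obtain ⟨q, i, hq, hi, rfl⟩ := hx
    refine ⟨T.ex (-T.el q i), Submonoid.subset_closure ⟨-q, i, by simp [hq], hi, ?_⟩,
      T.ex_mul_neg hq i, T.ex_neg_mul hq i⟩
    rw [el_neg]
  | one => exact ⟨1, one_mem _, by simp, by simp⟩
  | mul x y _ _ hx hy =>
    obtain ⟨a, ha, ha1, ha2⟩ := hx
    obtain ⟨b, hb, hb1, hb2⟩ := hy
    refine ⟨b * a, mul_mem hb ha, ?_, ?_⟩
    · rw [mul_assoc, ← mul_assoc y, hb1, one_mul, ha1]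
    · rw [mul_assoc, ← mul_assoc a, ha2, one_mul, hb2]

/-- Right multiplication by `g` preserves having logarithmic derivative in `L`. -/
lemma GG_logder {α : ℕ → ℕ → ℝ} (hW : ∀ n m : ℕ, W n * W m - W m * W n = α n m • W (n + m))
    {k : ℕ} {g : A} (hg : g ∈ T.GG k) :
    ∀ U : A, (∃ B ∈ T.LL k, T.E U = U * B) → ∃ B ∈ T.LL k, T.E (U * g) = (U * g) * B := by
  induction hg using Submonoid.closure_induction with
  | mem x hx =>
    rintro U ⟨B, hB, hU⟩
    obtain ⟨q, i, hq, hi, rfl⟩ := hx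
    refine ⟨T.ex (-T.el q i) * B * T.ex (T.el q i) + T.E (T.el q i),
      add_mem (T.conj_mem hW (by omega) hq hB) (by rw [E_el]; exact T.el_mem k _ hi), ?_⟩
    rw [E_mul, hU, E_ex T hq, mul_add]
    congr 1
    · rw [mul_assoc U (T.ex (T.el q i)), ← mul_assoc (T.ex (T.el q i)),
        ← mul_assoc (T.ex (T.el q i)), T.ex_mul_neg hq, one_mul, mul_assoc]
    · rw [mul_assoc]
  | one => intro U h; simpa using h
  | mul x y _ _ hx hy =>
    intro U h
    rw [← mul_assoc]
    exact hy _ (hx _ h)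

/-- `x = 1 + λ^s Y + O(λ^{s+1})`. -/
def Lead (s : ℕ) (Y : D) (x : A) : Prop :=
  T.cf 0 x = 1 ∧ (∀ n, 0 < n → n < s → T.cf n x = 0) ∧ T.cf s x = Y

lemma lead_mul {s : ℕ} (hs : 1 ≤ s) (hsm : s ≤ m) {Y Z : D} {x y : A} (hx : T.Lead s Y x)
    (hy : T.Lead s Z y) : T.Lead s (Y + Z) (x * y) := by
  obtain ⟨hx0, hx1, hx2⟩ := hx
  obtain ⟨hy0, hy1, hy2⟩ := hy
  refine ⟨?_, ?_, ?_⟩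
  · rw [T.cf_mul 0 (by omega)]; simp [hx0, hy0]
  · intro n hn hns
    rw [T.cf_mul n (by omega)]
    refine Finset.sum_eq_zero fun ij hij => ?_
    have h' := Finset.HasAntidiagonal.mem_antidiagonal.mp hij
    by_cases h1 : ij.1 = 0
    · rw [hy1 ij.2 (by omega) (by omega), mul_zero]
    · rw [hx1 ij.1 (by omega) (by omega), zero_mul]
  · rw [T.cf_mul s hsm]
    obtain ⟨t, rfl⟩ : ∃ t, s = t + 1 := ⟨s - 1, by omega⟩
    rw [Finset.Nat.sum_antidiagonal_succ, Finset.sum_eq_single (t, 0)]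
    · simp [hx0, hy0, hx2, hy2, add_comm]
    · intro ij hij hne
      have h' := Finset.HasAntidiagonal.mem_antidiagonal.mp hij
      have : ij.2 ≠ 0 := fun h => hne (Prod.ext (by simp; omega) h)
      rw [hx1 (ij.1 + 1) (by omega) (by omega), zero_mul]
    · simp

lemma lead_ex {s : ℕ} (hs : 1 ≤ s) (hsm : s ≤ m) (c : ℝ) (i : ℕ) :
    T.Lead s (c • W i) (T.ex (T.el (C c * X ^ s) i)) := by
  set v := T.el (C c * X ^ s) i with hv
  have hcf : ∀ n ≤ m, T.cf n v = if n = s then c • W i else 0 := by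
    intro n hn
    rw [hv, T.cf_el n hn, coeff_C_mul, coeff_X_pow]
    split_ifs <;> simp
  have h2 : ∀ j n, n ≤ s → T.cf n (v ^ (j + 2)) = 0 := by
    intro j n hn
    rw [pow_succ, T.cf_mul n (by omega)]
    refine Finset.sum_eq_zero fun ij hij => ?_
    have h' := Finset.HasAntidiagonal.mem_antidiagonal.mp hij
    rw [hcf ij.2 (by omega)]
    split_ifs with h
    · rw [T.cf_pow (by rw [hcf 0 (by omega), if_neg (by omega)]) (j + 1) ij.1 (by omega)
        (by omega), zero_mul]
    · rw [mul_zero]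
  have h3 : ∀ n ≤ s, T.cf n (T.ex v) = T.cf n 1 + T.cf n v := by
    intro n hn
    obtain ⟨t, rfl⟩ : ∃ t, m = t + 1 := ⟨m - 1, by omega⟩
    rw [ex, rexp, Finset.sum_range_succ', Finset.sum_range_succ', map_add, map_add, map_sum,
      Finset.sum_eq_zero]
    · simp [add_comm]
    · intro j _
      rw [map_smul, h2 j n hn, smul_zero]
  refine ⟨?_, ?_, ?_⟩
  · rw [h3 0 (by omega), T.cf_one 0 (by omega), hcf 0 (by omega), if_pos rfl, if_neg (by omega),
      add_zero]
  · intro n hn hns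
    rw [h3 n (by omega), T.cf_one n (by omega), hcf n (by omega), if_neg (by omega),
      if_neg (by omega), add_zero]
  · rw [h3 s le_rfl, T.cf_one s hsm, hcf s hsm, if_neg (by omega), if_pos rfl, zero_add]

lemma lead_exists {s k : ℕ} (hs : 1 ≤ s) (hsm : s ≤ m) {Y : D} (hY : Y ∈ SS W k) :
    ∃ V ∈ T.GG k, T.Lead s Y V := by
  induction hY using Submodule.closure_induction with
  | zero =>
    refine ⟨1, one_mem _, ?_, ?_, ?_⟩
    · rw [T.cf_one 0 (by omega), if_pos rfl]
    · intro n hn hns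
      rw [T.cf_one n (by omega), if_neg (by omega)]
    · rw [T.cf_one s hsm, if_neg (by omega)]
  | add x y _ _ hx hy =>
    obtain ⟨V, hV, hV'⟩ := hx
    obtain ⟨U, hU, hU'⟩ := hy
    exact ⟨V * U, mul_mem hV hU, T.lead_mul hs hsm hV' hU'⟩
  | smul_mem r x hx =>
    obtain ⟨i, hi, rfl⟩ := hx
    refine ⟨_, Submonoid.subset_closure ⟨C r * X ^ s, i, ?_, hi, rfl⟩, T.lead_ex hs hsm r i⟩
    simp [show s ≠ 0 by omega]

lemma logder_coeff {s k : ℕ} (hs : 1 ≤ s) (hsm : s ≤ m) {U B : A} (hB : B ∈ T.LL k)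
    (hU : T.E U = U * B) {Y : D} (hl : T.Lead s Y U) : Y ∈ SS W k := by
  obtain ⟨h0, h1, h2⟩ := hl
  have key : ∀ n ≤ m, (∀ j, 0 < j → j ≤ n → T.cf j U * T.cf (n - j) B = 0) →
      (n : ℝ) • T.cf n U = T.cf n B := by
    intro n hn h
    rw [← T.cf_E n hn, hU, T.cf_mul n hn, Finset.sum_eq_single (0, n)]
    · simp [h0]
    · intro ij hij hne
      have h' := Finset.HasAntidiagonal.mem_antidiagonal.mp hij
      have h1 : ij.1 ≠ 0 := fun h => hne (Prod.ext h (by simp; omega))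
      have := h ij.1 (by omega) (by omega)
      rwa [show n - ij.1 = ij.2 by omega] at this
    · simp
  have hB0 : T.cf 0 B = 0 := by
    rw [← key 0 (by omega) (fun j hj hj' => by omega)]; simp
  have := key s hsm fun j hj hjs => by
    rcases Nat.lt_or_ge j s with h | h
    · rw [h1 j hj h, zero_mul]
    · rw [show s - j = 0 by omega, hB0, mul_zero]
  rw [h2] at this
  have hY : Y = (s : ℝ)⁻¹ • T.cf s B := by
    rw [← this, smul_smul, inv_mul_cancel₀ (by positivity), one_smul]
  rw [hY]
  exact Submodule.smul_mem _ _ (hB s hsm)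

lemma factor {α : ℕ → ℕ → ℝ} (hW : ∀ n m : ℕ, W n * W m - W m * W n = α n m • W (n + m))
    (k : ℕ) : ∀ (d s : ℕ), 1 ≤ s → s + d = m + 1 → ∀ U : A, T.cf 0 U = 1 →
      (∀ n, 0 < n → n < s → T.cf n U = 0) → (∃ B ∈ T.LL k, T.E U = U * B) → U ∈ T.GG k := by
  intro d
  induction d with
  | zero =>
    intro s hs hsd U h0 h1 _
    have : U = 1 := T.cf_ext _ _ fun n hn => by
      rw [T.cf_one n hn]
      split_ifs with h
      · rw [h, h0]
      · exact h1 n (by omega) (by omega)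
    rw [this]
    exact one_mem _
  | succ d ih =>
    rintro s hs hsd U h0 h1 ⟨B, hB, hU⟩
    have hl : T.Lead s (T.cf s U) U := ⟨h0, h1, rfl⟩
    have hY := T.logder_coeff hs (by omega) hB hU hl
    obtain ⟨V, hV, hVl⟩ := T.lead_exists (m := m) hs (by omega) (Submodule.neg_mem _ hY)
    have hUV := T.lead_mul hs (by omega) hl hVl
    rw [add_neg_cancel] at hUV
    obtain ⟨a0, a1, a2⟩ := hUV
    have hG : U * V ∈ T.GG k := by
      refine ih (s + 1) (by omega) (by omega) (U * V) a0 (fun n hn hns => ?_)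
        (T.GG_logder hW hV U ⟨B, hB, hU⟩)
      rcases Nat.lt_or_ge n s with h | h
      · exact a1 n hn h
      · rw [show n = s by omega, a2]
    obtain ⟨V', hV', e1, _⟩ := T.GG_inv hV
    have : U = (U * V) * V' := by rw [mul_assoc, e1, mul_one]
    rw [this]
    exact mul_mem hG hV'

lemma cf_zero_ex {p : ℝ[X]} (hp : p.eval 0 = 0) (i : ℕ) : T.cf 0 (T.ex (T.el p i)) = 1 := by
  rw [ex, rexp, Finset.sum_range_succ', map_add, map_sum, Finset.sum_eq_zero]
  · simp [T.cf_one 0 (Nat.zero_le _)]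
  · intro j _
    rw [map_smul, T.cf_pow (T.cf_el_zero hp i) _ 0 (by omega) (by omega), smul_zero]

lemma cf_zero_mul (x y : A) : T.cf 0 (x * y) = T.cf 0 x * T.cf 0 y := by
  rw [T.cf_mul 0 (Nat.zero_le _)]; simp

lemma main {α : ℕ → ℕ → ℝ} (hW : ∀ n m : ℕ, W n * W m - W m * W n = α n m • W (n + m))
    {k l : ℕ} (hkl : k ≤ l) {p₁ p₂ : ℝ[X]} (hp₁ : p₁.eval 0 = 0) (hp₂ : p₂.eval 0 = 0) :
    ∃ g ∈ T.GG k, T.ex (T.el p₂ l) * T.ex (T.el p₁ k) =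
      T.ex (T.el p₁ k) * T.ex (T.el p₂ l) * g := by
  rcases hkl.eq_or_lt with rfl | hlt
  · exact ⟨1, one_mem _, by rw [mul_one]; exact rexp_commute _ (T.el_comm _ _ _)⟩
  have hn₁ : (-p₁).eval 0 = 0 := by simp [hp₁]
  have hn₂ : (-p₂).eval 0 = 0 := by simp [hp₂]
  set a := T.el p₁ k with ha
  set b := T.el p₂ l with hb
  have ea : T.ex a * T.ex (-a) = 1 := T.ex_mul_neg hp₁ k
  have ea' : T.ex (-a) * T.ex a = 1 := T.ex_neg_mul hp₁ k
  have eb : T.ex b * T.ex (-b) = 1 := T.ex_mul_neg hp₂ l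
  have eb' : T.ex (-b) * T.ex b = 1 := T.ex_neg_mul hp₂ l
  have da : T.E (T.ex a) = T.ex a * T.E a := T.E_ex hp₁ k
  have db : T.E (T.ex b) = T.ex b * T.E b := T.E_ex hp₂ l
  have dna : T.E (T.ex (-a)) = - (T.ex (-a) * T.E a) := by
    have := T.E_ex hn₁ k
    rwa [el_neg, map_neg, mul_neg] at this
  have dnb : T.E (T.ex (-b)) = - (T.ex (-b) * T.E b) := by
    have := T.E_ex hn₂ l
    rwa [el_neg, map_neg, mul_neg] at this
  have cA : ∀ x ∈ T.LL k, T.ex (-a) * x * T.ex a ∈ T.LL k := fun x hx =>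
    T.conj_mem hW le_rfl hp₁ hx
  have cA' : ∀ x ∈ T.LL k, T.ex a * x * T.ex (-a) ∈ T.LL k := fun x hx => by
    have := T.conj_mem hW (le_refl k) hn₁ hx
    rwa [el_neg, neg_neg] at this
  have cB : ∀ x ∈ T.LL k, T.ex (-b) * x * T.ex b ∈ T.LL k := fun x hx =>
    T.conj_mem hW hkl hp₂ hx
  have hEb : T.E b ∈ T.LL k := by rw [hb, E_el]; exact T.el_mem k _ hlt
  have hEa : T.ex (-b) * T.E a * T.ex b - T.E a ∈ T.LL k := by
    refine rexp_conj_sub_mem (T.el_pow_zero hp₂ l) (T.LL k) (fun y hy => T.br_mem hW hkl p₂ hy) _ ?_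
    rw [ha, E_el]
    exact T.br_mem' hW (by omega) _ _
  refine ⟨T.ex (-b) * T.ex (-a) * T.ex b * T.ex a, ?_, ?_⟩
  · refine T.factor hW k m 1 le_rfl (by omega) _ ?_ (fun n _ _ => by omega) ?_
    · have h1 := T.cf_zero_ex hn₁ k
      have h2 := T.cf_zero_ex hn₂ l
      rw [el_neg] at h1 h2
      rw [cf_zero_mul, cf_zero_mul, cf_zero_mul, h1, h2, T.cf_zero_ex hp₁, T.cf_zero_ex hp₂]
      simp
    · refine ⟨T.ex (-a) * (T.E b - T.ex (-b) * (T.ex a * T.E b * T.ex (-a)) * T.ex b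
        - (T.ex (-b) * T.E a * T.ex b - T.E a)) * T.ex a, cA _ (sub_mem (sub_mem hEb
        (cB _ (cA' _ hEb))) hEa), ?_⟩
      rw [E_mul, E_mul, E_mul, da, db, dna, dnb]
      have caa : T.E a * T.ex a = T.ex a * T.E a := by
        have : Commute (T.E a) a := by rw [ha, E_el]; exact T.el_comm _ _ _
        exact (show Commute (T.E a) (rexp (m + 1) a) from
          Commute.sum_right _ _ _ fun j _ => (this.pow_right j).smul_right ((j.factorial : ℝ)⁻¹)).eq
      have r1 : ∀ x, T.ex a * (T.ex (-a) * x) = x := fun x => by rw [← mul_assoc, ea, one_mul]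
      have r2 : ∀ x, T.ex (-a) * (T.ex a * x) = x := fun x => by rw [← mul_assoc, ea', one_mul]
      have r3 : ∀ x, T.ex b * (T.ex (-b) * x) = x := fun x => by rw [← mul_assoc, eb, one_mul]
      simp only [mul_assoc, mul_sub, sub_mul, add_mul, neg_mul, mul_neg, r1, r2, r3, caa]
      abel
  · have r1 : ∀ x, T.ex a * (T.ex (-a) * x) = x := fun x => by rw [← mul_assoc, ea, one_mul]
    have r3 : ∀ x, T.ex b * (T.ex (-b) * x) = x := fun x => by rw [← mul_assoc, eb, one_mul]
    simp only [mul_assoc, r1, r3]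

end TruncModel

/-! ### The quotient `D[λ]/(λ^{m₀+1})` is a model -/

lemma toQ_X_pow {D : Type*} [Ring D] [Algebra ℝ D] (m₀ : ℕ) :
    toQ m₀ ((X : D[X]) ^ (m₀ + 1)) = 0 := by
  have h : RingQuot.mkRingHom (lamRel D m₀) (X ^ (m₀ + 1)) = RingQuot.mkRingHom (lamRel D m₀) 0 :=
    RingQuot.mkRingHom_rel ⟨rfl, rfl⟩
  rw [map_zero] at h
  exact h

/-- Congruence modulo `λ^{m₀+1}`. -/
def truncCon (D : Type*) [Ring D] (m₀ : ℕ) : RingCon D[X] where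
  r p q := ∀ n ≤ m₀, p.coeff n = q.coeff n
  iseqv := ⟨fun _ _ _ => rfl, fun h n hn => (h n hn).symm,
    fun h h' n hn => (h n hn).trans (h' n hn)⟩
  add' := fun h h' n hn => by rw [coeff_add, coeff_add, h n hn, h' n hn]
  mul' := fun h h' n hn => by
    rw [coeff_mul, coeff_mul]
    refine Finset.sum_congr rfl fun ij hij => ?_
    have h2 := Finset.HasAntidiagonal.mem_antidiagonal.mp hij
    rw [h _ (by omega), h' _ (by omega)]

lemma toQ_eq_iff {D : Type*} [Ring D] [Algebra ℝ D] (m₀ : ℕ) (p q : D[X]) :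
    toQ m₀ p = toQ m₀ q ↔ ∀ n ≤ m₀, p.coeff n = q.coeff n := by
  constructor
  · intro h
    have hr : ∀ ⦃x y : D[X]⦄, lamRel D m₀ x y → (truncCon D m₀).mk' x = (truncCon D m₀).mk' y := by
      rintro x y ⟨rfl, rfl⟩
      refine (RingCon.eq _).mpr fun n hn => ?_
      rw [coeff_X_pow, if_neg (by omega), coeff_zero]
    have h2 := congrArg (RingQuot.lift ⟨(truncCon D m₀).mk', hr⟩) h
    rw [toQ, RingQuot.lift_mkRingHom_apply, RingQuot.lift_mkRingHom_apply] at h2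
    exact (RingCon.eq _).mp h2
  · intro h
    have : (X : D[X]) ^ (m₀ + 1) ∣ p - q := X_pow_dvd_iff.mpr fun d hd => by
      rw [coeff_sub, h d (by omega), sub_self]
    obtain ⟨r, hr⟩ := this
    rw [← sub_eq_zero, ← map_sub, hr, map_mul, toQ_X_pow, zero_mul]

lemma toQ_surj {D : Type*} [Ring D] [Algebra ℝ D] (m₀ : ℕ) :
    Function.Surjective (toQ (D := D) m₀) := RingQuot.mkRingHom_surjective _

lemma toQ_smul {D : Type*} [Ring D] [Algebra ℝ D] (m₀ : ℕ) (c : ℝ) (p : D[X]) :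
    toQ m₀ (c • p) = c • toQ m₀ p := by
  have h : toQ (D := D) m₀ = (RingQuot.mkAlgHom ℝ (lamRel D m₀) : D[X] →+* _) :=
    (RingQuot.mkAlgHom_coe ℝ (lamRel D m₀)).symm
  rw [h]
  exact map_smul (RingQuot.mkAlgHom ℝ (lamRel D m₀)) c p

/-- A representative of a class. -/
noncomputable def repQ {D : Type*} [Ring D] [Algebra ℝ D] {m₀ : ℕ}
    (x : RingQuot (lamRel D m₀)) : D[X] := Function.surjInv (toQ_surj m₀) x

lemma toQ_repQ {D : Type*} [Ring D] [Algebra ℝ D] {m₀ : ℕ}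
    (x : RingQuot (lamRel D m₀)) : toQ m₀ (repQ x) = x := Function.surjInv_eq (toQ_surj m₀) x

lemma coeff_repQ {D : Type*} [Ring D] [Algebra ℝ D] {m₀ : ℕ} {x : RingQuot (lamRel D m₀)} {p : D[X]}
    (h : toQ m₀ p = x) {n : ℕ} (hn : n ≤ m₀) : (repQ x).coeff n = p.coeff n :=
  (toQ_eq_iff m₀ _ _).mp ((toQ_repQ x).trans h.symm) n hn

/-- The coefficient maps of the quotient. -/
noncomputable def cfQ (D : Type*) [Ring D] [Algebra ℝ D] (m₀ n : ℕ) :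
    RingQuot (lamRel D m₀) →ₗ[ℝ] D where
  toFun x := if n ≤ m₀ then (repQ x).coeff n else 0
  map_add' x y := by
    split_ifs with h
    · rw [coeff_repQ (p := repQ x + repQ y) (by rw [map_add, toQ_repQ, toQ_repQ]) h, coeff_add]
    · simp
  map_smul' c x := by
    split_ifs with h
    · rw [coeff_repQ (p := c • repQ x) (by rw [toQ_smul, toQ_repQ]) h, coeff_smul]; rfl
    · simp

lemma cfQ_toQ {D : Type*} [Ring D] [Algebra ℝ D] {m₀ n : ℕ} (hn : n ≤ m₀) (p : D[X]) :
    cfQ D m₀ n (toQ m₀ p) = p.coeff n := by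
  change (if n ≤ m₀ then (repQ (toQ m₀ p)).coeff n else 0) = _
  rw [if_pos hn, coeff_repQ rfl hn]

lemma cfQ_ext {D : Type*} [Ring D] [Algebra ℝ D] {m₀ : ℕ} (x y : RingQuot (lamRel D m₀))
    (h : ∀ n ≤ m₀, cfQ D m₀ n x = cfQ D m₀ n y) : x = y := by
  obtain ⟨p, rfl⟩ := toQ_surj m₀ x
  obtain ⟨q, rfl⟩ := toQ_surj m₀ y
  refine (toQ_eq_iff m₀ p q).mpr fun n hn => ?_
  rw [← cfQ_toQ hn, ← cfQ_toQ hn, h n hn]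

lemma coeff_euler {D : Type*} [Ring D] [Algebra ℝ D] (p : D[X]) (n : ℕ) :
    (X * derivative p).coeff n = (n : ℝ) • p.coeff n := by
  cases n with
  | zero => simp
  | succ n =>
    rw [coeff_X_mul, coeff_derivative, Nat.cast_smul_eq_nsmul, nsmul_eq_mul']
    push_cast
    rfl

lemma cfQ_euler {D : Type*} [Ring D] [Algebra ℝ D] {m₀ n : ℕ} (hn : n ≤ m₀)
    (x : RingQuot (lamRel D m₀)) :
    cfQ D m₀ n (toQ m₀ (X * derivative (repQ x))) = (n : ℝ) • cfQ D m₀ n x := by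
  rw [cfQ_toQ hn, coeff_euler, ← cfQ_toQ hn, toQ_repQ]

/-- The Euler derivation on the quotient. -/
noncomputable def eulerQ (D : Type*) [Ring D] [Algebra ℝ D] (m₀ : ℕ) :
    RingQuot (lamRel D m₀) →ₗ[ℝ] RingQuot (lamRel D m₀) where
  toFun x := toQ m₀ (X * derivative (repQ x))
  map_add' x y := cfQ_ext _ _ fun n hn => by
    rw [map_add, cfQ_euler hn, cfQ_euler hn, cfQ_euler hn, map_add, smul_add]
  map_smul' c x := cfQ_ext _ _ fun n hn => by
    rw [map_smul, cfQ_euler hn, cfQ_euler hn, map_smul, smul_comm]; rfl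

/-- The quotient as a model. -/
noncomputable def modelQ {D : Type*} [Ring D] [Algebra ℝ D] (W : ℕ → D) (m₀ : ℕ) :
    TruncModel (RingQuot (lamRel D m₀)) D W m₀ where
  cf := cfQ D m₀
  E := eulerQ D m₀
  el p i := toQ m₀ (pW W p i)
  cf_ext := cfQ_ext
  cf_mul n hn x y := by
    obtain ⟨p, rfl⟩ := toQ_surj m₀ x
    obtain ⟨q, rfl⟩ := toQ_surj m₀ y
    rw [← map_mul, cfQ_toQ hn, coeff_mul]
    refine Finset.sum_congr rfl fun ij hij => ?_
    have h2 := Finset.HasAntidiagonal.mem_antidiagonal.mp hij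
    rw [cfQ_toQ (by omega), cfQ_toQ (by omega)]
  cf_one n hn := by
    rw [← map_one (toQ m₀), cfQ_toQ hn, coeff_one]
  cf_E n hn x := cfQ_euler hn x
  cf_el n hn p i := by
    rw [cfQ_toQ hn, pW, coeff_mul_C, coeff_map, Algebra.smul_def]

/-- Under the Witt condition, two exponential factors can be reordered in `Q` at the
cost of a finite product of exponentials of single terms with strictly larger indices:
`exp(p₂·W_ℓ)·exp(p₁·W_k) = exp(p₁·W_k)·exp(p₂·W_ℓ)·exp(q₁·W_{i₁})⋯exp(q_N·W_{i_N})`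
with `q_j(0) = 0` and `i_j ≥ k + 1`. -/
theorem witt_exp_reorder {D : Type*} [Ring D] [Algebra ℝ D]
    (W : ℕ → D) (α : ℕ → ℕ → ℝ)
    (hW : ∀ n m : ℕ, W n * W m - W m * W n = α n m • W (n + m))
    (m₀ : ℕ) (hm₀ : 1 ≤ m₀) (k ℓ : ℕ) (hkl : k ≤ ℓ)
    (p₁ p₂ : Polynomial ℝ) (hp₁ : p₁.eval 0 = 0) (hp₂ : p₂.eval 0 = 0) :
    ∃ (N : ℕ) (q : ℕ → Polynomial ℝ) (idx : ℕ → ℕ),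
      (∀ j, (q j).eval 0 = 0) ∧
      (∀ j, k + 1 ≤ idx j) ∧
      expQ (toQ m₀ (pW W p₂ ℓ)) * expQ (toQ m₀ (pW W p₁ k)) =
        expQ (toQ m₀ (pW W p₁ k)) * expQ (toQ m₀ (pW W p₂ ℓ)) *
          ((List.range N).map fun j => expQ (toQ m₀ (pW W (q j) (idx j)))).prod := by
  obtain ⟨g, hg, h⟩ := (modelQ W m₀).main hW hkl hp₁ hp₂
  obtain ⟨l, hl, rfl⟩ := Submonoid.exists_list_of_mem_closure hg
  have hl' : ∀ j : Fin l.length, ∃ (q : ℝ[X]) (i : ℕ), q.eval 0 = 0 ∧ k + 1 ≤ i ∧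
      l[j] = expQ (toQ m₀ (pW W q i)) := fun j => hl _ (List.getElem_mem j.2)
  choose q i hq hi hgen using hl'
  refine ⟨l.length, fun j => if hj : j < l.length then q ⟨j, hj⟩ else 0,
    fun j => if hj : j < l.length then i ⟨j, hj⟩ else k + 1, ?_, ?_, ?_⟩
  · intro j
    dsimp only
    split_ifs with hj
    · exact hq _
    · simp
  · intro j
    dsimp only
    split_ifs with hj
    · exact hi _
    · exact le_rfl
  · refine h.trans ?_
    congr 2
    refine List.ext_getElem (by simp) fun j h1 h2 => ?_
    simp only [List.getElem_map, List.getElem_range, h1, dif_pos]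
    exact hgen ⟨j, h1⟩
end

section
/- Let u₁, …, u_n ∈ Q be any finite sequence of elements of the form u_j = ∑_{i=0}^{k_j} p_{j,i}·W_i with p_{j,i} ∈ ℝ[λ] and p_{j,i}(0) = 0. Then there exist K ∈ ℕ and polynomials P₀, P₁, …, P_K ∈ ℝ[λ] with P_i(0) = 0 such that exp(u₁)·exp(u₂)⋯exp(u_n) = exp(P₀·W₀)·exp(P₁·W₁)⋯exp(P_K·W_K) holds in Q, where the factors on the right appear in increasing order of the index of W. -/
open Polynomial

section abstractPart

open IsNilpotent in
theorem conj_mem {A : Type*} [Ring A] [Algebra ℚ A] (u y : A) (hu : IsNilpotent u)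
    (N : Submodule ℚ A) (h1 : u * y - y * u ∈ N) (h2 : ∀ z ∈ N, u * z - z * u ∈ N) :
    exp u * y * exp (-u) - y ∈ N := by
  set l : Module.End ℚ A := LinearMap.mulLeft ℚ u with hl
  set r : Module.End ℚ A := LinearMap.mulRight ℚ (-u) with hr
  obtain ⟨n, hn⟩ := hu
  have hln : l ^ n = 0 := by
    rw [hl, LinearMap.pow_mulLeft, hn]; simp
  have hrn : r ^ n = 0 := by
    rw [hr, LinearMap.pow_mulRight, neg_pow, hn]; simp
  have hun : (-u) ^ n = 0 := by rw [neg_pow, hn]; simp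
  have hc : Commute l r := by
    ext z; simp [hl, hr, mul_assoc]
  have hadd := exp_add_of_commute hc ⟨n, hln⟩ ⟨n, hrn⟩
  have e1 : ∀ z, exp l z = exp u * z := by
    intro z
    rw [exp_eq_sum hln, exp_eq_sum hn]
    simp [hl, LinearMap.pow_mulLeft, Finset.sum_mul]
  have e2 : ∀ z, exp r z = z * exp (-u) := by
    intro z
    rw [exp_eq_sum hrn, exp_eq_sum hun]
    simp [hr, LinearMap.pow_mulRight, Finset.mul_sum]
  have e3 : exp u * y * exp (-u) = exp (l + r) y := by
    rw [hadd, Module.End.mul_apply, e2, e1, mul_assoc]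
  obtain ⟨k, hk⟩ := hc.isNilpotent_add ⟨n, hln⟩ ⟨n, hrn⟩
  have hk' : (l + r) ^ (k + 1) = 0 := by rw [_root_.pow_succ, hk, zero_mul]
  have ad : ∀ z, (l + r) z = u * z - z * u := by
    intro z; simp [hl, hr, sub_eq_add_neg]
  have hpow : ∀ i, ((l + r) ^ (i + 1)) y ∈ N := by
    intro i
    induction i with
    | zero => simpa [ad] using h1
    | succ i ih =>
      rw [_root_.pow_succ', Module.End.mul_apply, ad]
      exact h2 _ ih
  rw [e3, exp_eq_sum hk', Finset.sum_range_succ']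
  simp only [LinearMap.add_apply, LinearMap.sum_apply, LinearMap.smul_apply]
  simp only [pow_zero, Nat.factorial_zero, Nat.cast_one, inv_one, one_smul, Module.End.one_apply,
    add_sub_cancel_right]
  exact N.sum_mem fun i _ => N.smul_mem _ (hpow i)

open IsNilpotent in
theorem logder {A : Type*} [Ring A] [Algebra ℚ A] (δ : A →ₗ[ℚ] A)
    (hδ : ∀ a b, δ (a * b) = δ a * b + a * δ b) (u : A) (hu : IsNilpotent u)
    (N : Submodule ℚ A) (h1 : δ u ∈ N) (h2 : ∀ z ∈ N, u * z - z * u ∈ N) :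
    ∃ l ∈ N, δ (exp u) = l * exp u := by
  have hone : δ 1 = 0 := by simpa using hδ 1 1
  let φ := Algebra.lmul ℚ A
  have hφ : ∀ a b, φ a b = a * b := fun a b => rfl
  have key := conj_mem (A := Module.End ℚ A) (φ u) δ (hu.map φ) (N.map φ.toLinearMap)
    ⟨- δ u, N.neg_mem h1, by
      ext z; simp [hφ, hδ]⟩ (by
      rintro _ ⟨z, hz, rfl⟩
      exact ⟨_, h2 z hz, by simp⟩)
  obtain ⟨l, hl, he⟩ := key
  rw [← map_neg, ← map_exp hu φ, ← map_exp hu.neg φ] at he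
  refine ⟨-l, N.neg_mem hl, ?_⟩
  have := LinearMap.congr_fun he (exp u)
  simp [hφ, exp_neg_mul_exp_self hu, hone] at this
  rw [neg_mul, this, neg_neg]

end abstractPart

section concretePart

variable {D : Type*} [Ring D] [Algebra ℝ D] {m₀ : ℕ}

/-- Coefficientwise congruence up to degree `m`. -/
def coefCon (D : Type*) [Ring D] (m : ℕ) : RingCon (Polynomial D) where
  r f g := ∀ j ≤ m, f.coeff j = g.coeff j
  iseqv := ⟨fun _ _ _ => rfl, fun h j hj => (h j hj).symm, fun h h' j hj => (h j hj).trans (h' j hj)⟩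
  add' := fun h h' j hj => by simp [h j hj, h' j hj]
  mul' := fun {a b c d} h h' j hj => by
    rw [coeff_mul, coeff_mul]
    refine Finset.sum_congr rfl fun p hp => ?_
    have := Finset.HasAntidiagonal.mem_antidiagonal.1 hp
    rw [h _ (by omega), h' _ (by omega)]

theorem toQ_surj_s14 (q : RingQuot (lamRel D m₀)) : ∃ f, toQ m₀ f = q :=
  RingQuot.mkRingHom_surjective _ q

theorem toQ_eq_iff_s14 (f g : Polynomial D) :
    toQ m₀ f = toQ m₀ g ↔ ∀ j ≤ m₀, f.coeff j = g.coeff j := by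
  constructor
  · intro h
    have w : ∀ ⦃a b⦄, lamRel D m₀ a b → (coefCon D m₀).mk' a = (coefCon D m₀).mk' b := by
      rintro a b ⟨rfl, rfl⟩
      refine (RingCon.eq _).2 ?_
      intro j hj
      rw [coeff_X_pow, if_neg (by omega), coeff_zero]
    have := congrArg (RingQuot.lift ⟨(coefCon D m₀).mk', w⟩) h
    unfold toQ at this
    rw [RingQuot.lift_mkRingHom_apply, RingQuot.lift_mkRingHom_apply] at this
    exact (RingCon.eq _).1 this
  · intro h
    have hd : X ^ (m₀ + 1) ∣ f - g := X_pow_dvd_iff.2 fun d hd => by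
      rw [coeff_sub, h d (by omega), sub_self]
    obtain ⟨r, hr⟩ := hd
    have h0 : toQ m₀ (X ^ (m₀ + 1) : Polynomial D) = 0 := by
      have : lamRel D m₀ (X ^ (m₀ + 1)) 0 := ⟨rfl, rfl⟩
      unfold toQ
      rw [RingQuot.mkRingHom_rel this, map_zero]
    rw [← sub_eq_zero, ← map_sub, hr, map_mul, h0, zero_mul]

theorem toQ_smul_s14 (c : ℝ) (f : Polynomial D) : toQ m₀ (c • f) = c • toQ m₀ f := by
  unfold toQ
  rw [RingQuot.mkRingHom_def]
  rfl

noncomputable instance ratAlgQ : Algebra ℚ (RingQuot (lamRel D m₀)) :=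
  Algebra.compHom _ (algebraMap ℚ ℝ)

theorem rat_smul_Q (c : ℚ) (q : RingQuot (lamRel D m₀)) : c • q = (c : ℝ) • q := rfl

instance : IsScalarTower ℚ ℝ (RingQuot (lamRel D m₀)) :=
  ⟨fun a b c => by rw [rat_smul_Q, smul_smul, Rat.smul_def]⟩

variable (D m₀) in
/-- The image of `λ`. -/
noncomputable def xQ : RingQuot (lamRel D m₀) := toQ m₀ X

theorem xQ_comm (q : RingQuot (lamRel D m₀)) : Commute (xQ D m₀) q := by
  obtain ⟨f, rfl⟩ := toQ_surj_s14 q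
  show xQ D m₀ * _ = _ * xQ D m₀
  rw [xQ, ← map_mul, ← map_mul, X_mul]

variable (D m₀) in
/-- The ideal generated by `λ^k`. -/
noncomputable def JQ (k : ℕ) : Submodule ℝ (RingQuot (lamRel D m₀)) :=
  LinearMap.range (LinearMap.mulLeft ℝ (xQ D m₀ ^ k))

theorem mem_JQ {k : ℕ} {q : RingQuot (lamRel D m₀)} : q ∈ JQ D m₀ k ↔ ∃ r, xQ D m₀ ^ k * r = q :=
  Iff.rfl

theorem JQ_mul {k l : ℕ} {a b : RingQuot (lamRel D m₀)} (ha : a ∈ JQ D m₀ k) (hb : b ∈ JQ D m₀ l) :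
    a * b ∈ JQ D m₀ (k + l) := by
  obtain ⟨a, rfl⟩ := ha
  obtain ⟨b, rfl⟩ := hb
  refine ⟨a * b, ?_⟩
  simp only [LinearMap.mulLeft_apply]
  rw [pow_add, mul_assoc, mul_assoc, ← mul_assoc a, ← ((xQ_comm a).pow_left l).eq]
  simp only [mul_assoc]

theorem JQ_zero (a : RingQuot (lamRel D m₀)) : a ∈ JQ D m₀ 0 := ⟨a, by simp⟩

theorem JQ_mul_right {k : ℕ} {a : RingQuot (lamRel D m₀)} (ha : a ∈ JQ D m₀ k)
    (b : RingQuot (lamRel D m₀)) : a * b ∈ JQ D m₀ k := by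
  simpa only [add_zero] using JQ_mul (l := 0) ha (JQ_zero b)

theorem JQ_mul_left {k : ℕ} {b : RingQuot (lamRel D m₀)} (hb : b ∈ JQ D m₀ k)
    (a : RingQuot (lamRel D m₀)) : a * b ∈ JQ D m₀ k := by
  simpa only [zero_add] using JQ_mul (k := 0) (JQ_zero a) hb

theorem JQ_mono {k l : ℕ} (h : k ≤ l) {a : RingQuot (lamRel D m₀)} (ha : a ∈ JQ D m₀ l) :
    a ∈ JQ D m₀ k := by
  obtain ⟨r, rfl⟩ := ha
  obtain ⟨t, rfl⟩ := Nat.exists_eq_add_of_le h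
  exact ⟨xQ D m₀ ^ t * r, by simp [pow_add]⟩

theorem JQ_top {a : RingQuot (lamRel D m₀)} (ha : a ∈ JQ D m₀ (m₀ + 1)) : a = 0 := by
  obtain ⟨r, rfl⟩ := ha
  have : xQ D m₀ ^ (m₀ + 1) = 0 := by
    rw [xQ, ← map_pow, ← map_zero (toQ m₀), toQ_eq_iff_s14]
    intro j hj
    rw [coeff_X_pow, if_neg (by omega), coeff_zero]
  simp [this]

theorem JQ_pow {a : RingQuot (lamRel D m₀)} (ha : a ∈ JQ D m₀ 1) (j : ℕ) : a ^ j ∈ JQ D m₀ j := by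
  induction j with
  | zero => exact JQ_zero _
  | succ j ih => rw [pow_succ]; exact JQ_mul ih ha

theorem JQ_nil {a : RingQuot (lamRel D m₀)} (ha : a ∈ JQ D m₀ 1) : a ^ (m₀ + 1) = 0 :=
  JQ_top (JQ_pow ha _)

theorem expQ_eq {a : RingQuot (lamRel D m₀)} (ha : a ∈ JQ D m₀ 1) :
    expQ a = IsNilpotent.exp a := by
  rw [IsNilpotent.exp_eq_sum (JQ_nil ha), expQ]
  refine Finset.sum_congr rfl fun j _ => ?_
  rw [rat_smul_Q]; simp

/-- The Euler derivation on `Q`. -/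
noncomputable def δfun (q : RingQuot (lamRel D m₀)) : RingQuot (lamRel D m₀) :=
  toQ m₀ (X * derivative (toQ_surj_s14 q).choose)

theorem δfun_mk (f : Polynomial D) : δfun (toQ m₀ f) = toQ m₀ (X * derivative f) := by
  unfold δfun
  have h := (toQ_surj_s14 (toQ m₀ f)).choose_spec
  rw [toQ_eq_iff_s14] at h ⊢
  intro j hj
  cases j with
  | zero => simp
  | succ j => rw [coeff_X_mul, coeff_X_mul, coeff_derivative, coeff_derivative, h _ hj]

variable (D m₀) in
/-- The Euler derivation as a linear map. -/
noncomputable def δQ : RingQuot (lamRel D m₀) →ₗ[ℚ] RingQuot (lamRel D m₀) :=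
  AddMonoidHom.toRatLinearMap
  { toFun := δfun
    map_zero' := by rw [← map_zero (toQ m₀), δfun_mk]; simp
    map_add' := fun a b => by
      obtain ⟨f, rfl⟩ := toQ_surj_s14 a
      obtain ⟨g, rfl⟩ := toQ_surj_s14 b
      rw [← map_add, δfun_mk, δfun_mk, δfun_mk, ← map_add, derivative_add, mul_add] }

theorem δQ_mk (f : Polynomial D) : δQ D m₀ (toQ m₀ f) = toQ m₀ (X * derivative f) := δfun_mk f

theorem δQ_mul (a b : RingQuot (lamRel D m₀)) :
    δQ D m₀ (a * b) = δQ D m₀ a * b + a * δQ D m₀ b := by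
  obtain ⟨f, rfl⟩ := toQ_surj_s14 a
  obtain ⟨g, rfl⟩ := toQ_surj_s14 b
  simp only [← map_mul, ← map_add, δQ_mk]
  congr 1
  rw [derivative_mul, mul_add, ← mul_assoc, ← mul_assoc, X_mul (p := f), mul_assoc f]

theorem δQ_one : δQ D m₀ 1 = 0 := by simpa using δQ_mul (m₀ := m₀) (1 : RingQuot (lamRel D m₀)) 1

theorem δQ_smul (c : ℝ) (a : RingQuot (lamRel D m₀)) : δQ D m₀ (c • a) = c • δQ D m₀ a := by
  obtain ⟨f, rfl⟩ := toQ_surj_s14 a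
  rw [← toQ_smul_s14, δQ_mk, δQ_mk, derivative_smul, ← toQ_smul_s14, mul_smul_comm]

theorem δQ_mem (a : RingQuot (lamRel D m₀)) : δQ D m₀ a ∈ JQ D m₀ 1 := by
  obtain ⟨f, rfl⟩ := toQ_surj_s14 a
  rw [δQ_mk, map_mul]
  exact ⟨_, by simp [xQ]; rfl⟩

theorem δQ_pow (k : ℕ) (r : RingQuot (lamRel D m₀)) :
    δQ D m₀ (xQ D m₀ ^ k * r) - (k : ℝ) • (xQ D m₀ ^ k * r) ∈ JQ D m₀ (k + 1) := by
  have h : δQ D m₀ (xQ D m₀ ^ k) = (k : ℝ) • xQ D m₀ ^ k := by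
    rw [xQ, ← map_pow, δQ_mk, ← toQ_smul_s14, toQ_eq_iff_s14]
    intro j _
    cases k with
    | zero => simp
    | succ k => 
      rw [derivative_X_pow, Nat.add_sub_cancel, ← mul_assoc, X_mul, mul_assoc, ← pow_succ',
        coeff_C_mul, coeff_smul]
      simp [Algebra.smul_def]
  rw [δQ_mul, h, smul_mul_assoc, add_sub_cancel_left]
  exact JQ_mul ⟨1, by simp⟩ (δQ_mem r)

variable (m₀) in
/-- The Lie algebra spanned by `λ^j W_i`, `j ≥ 1`. -/
noncomputable def LQ (W : ℕ → D) : Submodule ℝ (RingQuot (lamRel D m₀)) :=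
  Submodule.span ℝ {q | ∃ j i, q = toQ m₀ (X ^ (j + 1) * C (W i))}

theorem LQ_le (W : ℕ → D) : LQ m₀ W ≤ JQ D m₀ 1 := by
  refine Submodule.span_le.2 ?_
  rintro _ ⟨j, i, rfl⟩
  refine ⟨toQ m₀ (X ^ j * C (W i)), ?_⟩
  rw [LinearMap.mulLeft_apply, xQ, ← map_pow, ← map_mul, ← mul_assoc, pow_one, pow_succ']

theorem LQ_δ (W : ℕ → D) {l} (hl : l ∈ LQ m₀ W) : δQ D m₀ l ∈ LQ m₀ W := by
  refine Submodule.span_induction (p := fun l _ => δQ D m₀ l ∈ LQ m₀ W) ?_ (by simp) ?_ ?_ hl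
  · rintro _ ⟨j, i, rfl⟩
    have : δQ D m₀ (toQ m₀ (X ^ (j + 1) * C (W i))) =
        ((j + 1 : ℕ) : ℝ) • toQ m₀ (X ^ (j + 1) * C (W i)) := by
      rw [δQ_mk, ← toQ_smul_s14]
      congr 1
      rw [derivative_mul, derivative_X_pow, Nat.add_sub_cancel, derivative_C, mul_zero, add_zero,
        ← mul_assoc, ← mul_assoc, X_mul, mul_assoc (C _), ← pow_succ', ← smul_mul_assoc]
      congr 1
      ext n
      rw [coeff_C_mul, coeff_smul]
      simp [Algebra.smul_def]
    rw [this]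
    exact Submodule.smul_mem _ _ (Submodule.subset_span ⟨j, i, rfl⟩)
  · intro a b _ _ ha hb
    rw [map_add]; exact add_mem ha hb
  · intro c a _ ha
    rw [δQ_smul]; exact Submodule.smul_mem _ _ ha

theorem LQ_lie (W : ℕ → D) (α : ℕ → ℕ → ℝ)
    (hW : ∀ n m : ℕ, W n * W m - W m * W n = α n m • W (n + m)) {a b}
    (ha : a ∈ LQ m₀ W) (hb : b ∈ LQ m₀ W) : a * b - b * a ∈ LQ m₀ W := by
  refine Submodule.span_induction₂ (p := fun a b _ _ => a * b - b * a ∈ LQ m₀ W)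
    ?_ (by simp) (by simp) ?_ ?_ ?_ ?_ ha hb
  · rintro _ _ ⟨j, i, rfl⟩ ⟨k, l, rfl⟩
    have : toQ m₀ (X ^ (j + 1) * C (W i)) * toQ m₀ (X ^ (k + 1) * C (W l)) -
       toQ m₀ (X ^ (k + 1) * C (W l)) * toQ m₀ (X ^ (j + 1) * C (W i)) =
       α i l • toQ m₀ (X ^ (j + k + 1 + 1) * C (W (i + l))) := by
      rw [← map_mul, ← map_mul, ← map_sub, ← toQ_smul_s14]
      congr 1
      have e : ∀ (j k : ℕ) (a b : D), X ^ (j + 1) * C a * (X ^ (k + 1) * C b) =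
          X ^ (j + k + 1 + 1) * C (a * b) := by
        intro j k a b
        rw [mul_assoc, ← mul_assoc (C a), ← X_pow_mul, C_mul, mul_assoc, ← mul_assoc, ← pow_add]
        congr 2; omega
      rw [e, e, add_comm k j, ← mul_sub, ← C_sub, hW, ← smul_C, mul_smul_comm]
    rw [this]
    exact Submodule.smul_mem _ _ (Submodule.subset_span ⟨_, _, rfl⟩)
  · intro x y z _ _ _ h1 h2
    convert add_mem h1 h2 using 1; noncomm_ring
  · intro x y z _ _ _ h1 h2
    convert add_mem h1 h2 using 1; noncomm_ring
  · intro r x y _ _ h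
    convert Submodule.smul_mem _ r h using 1
    rw [smul_sub, smul_mul_assoc, mul_smul_comm]
  · intro r x y _ _ h
    convert Submodule.smul_mem _ r h using 1
    rw [smul_sub, smul_mul_assoc, mul_smul_comm]

/-- coefficients of elements of `L` -/
theorem LQ_coeff (W : ℕ → D) {l} (hl : l ∈ LQ m₀ W) :
    ∃ f, toQ m₀ f = l ∧ ∀ j, f.coeff j ∈ Submodule.span ℝ (Set.range W) := by
  refine Submodule.span_induction (p := fun l _ => ∃ f, toQ m₀ f = l ∧
    ∀ j, f.coeff j ∈ Submodule.span ℝ (Set.range W)) ?_ ⟨0, by simp⟩ ?_ ?_ hl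
  · rintro _ ⟨j, i, rfl⟩
    refine ⟨_, rfl, fun k => ?_⟩
    rw [coeff_mul_C, coeff_X_pow]
    split_ifs
    · rw [one_mul]; exact Submodule.subset_span ⟨i, rfl⟩
    · simp
  · rintro _ _ _ _ ⟨f, rfl, hf⟩ ⟨g, rfl, hg⟩
    exact ⟨f + g, by simp, fun j => by rw [coeff_add]; exact add_mem (hf j) (hg j)⟩
  · rintro c _ _ ⟨f, rfl, hf⟩
    exact ⟨c • f, toQ_smul_s14 _ _, fun j => by rw [coeff_smul]; exact Submodule.smul_mem _ _ (hf j)⟩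

theorem LQ_lead (W : ℕ → D) {l} (hl : l ∈ LQ m₀ W) {k : ℕ} (hk : k ≤ m₀) (hJ : l ∈ JQ D m₀ k) :
    ∃ w ∈ Submodule.span ℝ (Set.range W), l - toQ m₀ (X ^ k * C w) ∈ JQ D m₀ (k + 1) := by
  obtain ⟨f, rfl, hf⟩ := LQ_coeff W hl
  refine ⟨_, hf k, ?_⟩
  obtain ⟨r, hr⟩ := hJ
  obtain ⟨r, rfl⟩ := toQ_surj_s14 r
  rw [LinearMap.mulLeft_apply, xQ, ← map_pow, ← map_mul, toQ_eq_iff_s14] at hr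
  have hd : X ^ (k + 1) ∣ f - X ^ k * C (f.coeff k) := X_pow_dvd_iff.2 fun d hd => by
    rw [coeff_sub, coeff_mul_C, coeff_X_pow]
    split_ifs with h
    · simp [h]
    · rw [← hr d (by omega), coeff_X_pow_mul', if_neg (by omega)]; simp
  obtain ⟨s, hs⟩ := hd
  rw [← map_sub, hs]
  exact ⟨toQ m₀ s, by simp [xQ]⟩

theorem pW_mem (W : ℕ → D) (p : Polynomial ℝ) (hp : p.eval 0 = 0) (i : ℕ) :
    toQ m₀ (pW W p i) ∈ LQ m₀ W := by
  have hX : X ∣ p := X_dvd_iff.2 (by rwa [coeff_zero_eq_eval_zero])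
  obtain ⟨q, rfl⟩ := hX
  clear hp
  unfold pW
  induction q using Polynomial.induction_on' with
  | add p q hp hq =>
    rw [mul_add, Polynomial.map_add, add_mul, map_add]; exact add_mem hp hq
  | monomial n a =>
    have : (X * monomial n a : Polynomial ℝ).map (algebraMap ℝ D) * C (W i) =
        a • (X ^ (n + 1) * C (W i)) := by
      rw [X_mul_monomial, map_monomial, ← C_mul_X_pow_eq_monomial, ← smul_mul_assoc]
      congr 1
      ext j
      simp [Algebra.smul_def, coeff_X_pow]
    rw [this, toQ_smul_s14]
    exact Submodule.smul_mem _ _ (Submodule.subset_span ⟨_, _, rfl⟩)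


theorem neg_shift {A : Type*} [Ring A] (a b c : A) :
    a * -(b * c * a) = -(a * b * c) * a := by
  simp only [mul_neg, neg_mul, mul_assoc]

set_option linter.unusedSimpArgs false

/-- Elements with inverse, stabilizing `L`, with logarithmic derivative in `L`. -/
structure GoodQ (W : ℕ → D) (g g' : RingQuot (lamRel D m₀)) : Prop where
  mul_inv : g * g' = 1
  inv_mul : g' * g = 1
  ad : ∀ l ∈ LQ m₀ W, g * l * g' ∈ LQ m₀ W
  ad' : ∀ l ∈ LQ m₀ W, g' * l * g ∈ LQ m₀ W
  ld : ∃ l ∈ LQ m₀ W, δQ D m₀ g = l * g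
  one : g - 1 ∈ JQ D m₀ 1

theorem GoodQ.refl (W : ℕ → D) : GoodQ W (1 : RingQuot (lamRel D m₀)) 1 :=
  ⟨by simp, by simp, by simp, by simp, ⟨0, by simp, by simp [δQ_one]⟩, by simp⟩

theorem GoodQ.inv {W : ℕ → D} {g g' : RingQuot (lamRel D m₀)} (h : GoodQ W g g') :
    GoodQ W g' g := by
  refine ⟨h.inv_mul, h.mul_inv, h.ad', h.ad, ?_, ?_⟩
  · obtain ⟨l, hl, e⟩ := h.ld
    refine ⟨-(g' * l * g), neg_mem (h.ad' l hl), ?_⟩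
    have h1 := δQ_mul g g'
    rw [h.mul_inv, δQ_one, e] at h1
    have h2 : g * δQ D m₀ g' = -(l * g * g') := by
      rw [eq_neg_iff_add_eq_zero, add_comm]; exact h1.symm
    calc δQ D m₀ g' = g' * (g * δQ D m₀ g') := by rw [← mul_assoc, h.inv_mul, one_mul]
      _ = _ := by rw [h2]; exact neg_shift g' l g
  · have : g' - 1 = -(g' * (g - 1)) := by
      rw [mul_sub, h.inv_mul, mul_one, neg_sub]
    rw [this]
    exact neg_mem (JQ_mul_left h.one _)

theorem GoodQ.mul {W : ℕ → D} {g g' k k' : RingQuot (lamRel D m₀)} (hg : GoodQ W g g')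
    (hk : GoodQ W k k') : GoodQ W (g * k) (k' * g') := by
  refine ⟨?_, ?_, ?_, ?_, ?_, ?_⟩
  · rw [mul_assoc, ← mul_assoc k, hk.mul_inv, one_mul, hg.mul_inv]
  · rw [mul_assoc, ← mul_assoc g', hg.inv_mul, one_mul, hk.inv_mul]
  · intro l hl
    have := hg.ad _ (hk.ad l hl)
    simpa only [mul_assoc] using this
  · intro l hl
    have := hk.ad' _ (hg.ad' l hl)
    simpa only [mul_assoc] using this
  · obtain ⟨l, hl, e⟩ := hg.ld
    obtain ⟨l', hl', e'⟩ := hk.ld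
    refine ⟨l + g * l' * g', add_mem hl (hg.ad _ hl'), ?_⟩
    have : g * l' * g' * (g * k) = g * (l' * k) := by
      rw [mul_assoc _ g', ← mul_assoc g', hg.inv_mul, one_mul, mul_assoc]
    rw [δQ_mul, e, e', add_mul, this, mul_assoc]
  · have : g * k - 1 = g * (k - 1) + (g - 1) := by (simp only [mul_sub, sub_mul, mul_add, add_mul, mul_one, one_mul, mul_assoc]; abel)
    rw [this]
    exact add_mem (JQ_mul_left hk.one _) hg.one

theorem expQ_sub_one {u : RingQuot (lamRel D m₀)} (hu : u ∈ JQ D m₀ 1) :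
    expQ u - 1 ∈ JQ D m₀ 1 := by
  rw [expQ, Finset.sum_range_succ']
  simp only [pow_zero, Nat.factorial_zero, Nat.cast_one, inv_one, one_smul, add_sub_cancel_right]
  exact Submodule.sum_mem _ fun i _ => Submodule.smul_mem _ _ (by
    rw [pow_succ]; exact JQ_mul_left hu _)

theorem GoodQ.exp {W : ℕ → D} (α : ℕ → ℕ → ℝ)
    (hW : ∀ n m : ℕ, W n * W m - W m * W n = α n m • W (n + m))
    {u : RingQuot (lamRel D m₀)} (hu : u ∈ LQ m₀ W) : GoodQ W (expQ u) (expQ (-u)) := by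
  have hJ := LQ_le W hu
  have hn : IsNilpotent u := ⟨_, JQ_nil hJ⟩
  have main : ∀ v ∈ LQ m₀ W, ∀ l ∈ LQ m₀ W, expQ v * l * expQ (-v) ∈ LQ m₀ W := by
    intro v hv l hl
    have hJ := LQ_le W hv
    have := conj_mem v l ⟨_, JQ_nil hJ⟩ ((LQ m₀ W).restrictScalars ℚ) (LQ_lie W α hW hv hl)
      (fun z hz => LQ_lie W α hW hv hz)
    rw [← expQ_eq hJ, ← expQ_eq (neg_mem hJ)] at this
    have h2 : expQ v * l * expQ (-v) - l ∈ LQ m₀ W := this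
    simpa using add_mem h2 hl
  refine ⟨?_, ?_, main u hu, ?_, ?_, expQ_sub_one hJ⟩
  · rw [expQ_eq hJ, expQ_eq (neg_mem hJ), IsNilpotent.exp_mul_exp_neg_self hn]
  · rw [expQ_eq hJ, expQ_eq (neg_mem hJ), IsNilpotent.exp_neg_mul_exp_self hn]
  · simpa using main (-u) (neg_mem hu)
  · rw [expQ_eq hJ]
    exact logder (δQ D m₀) δQ_mul u hn ((LQ m₀ W).restrictScalars ℚ) (LQ_δ W hu)
      (fun z hz => LQ_lie W α hW hu hz)

theorem GoodQ.list {W : ℕ → D} (α : ℕ → ℕ → ℝ)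
    (hW : ∀ n m : ℕ, W n * W m - W m * W n = α n m • W (n + m))
    {ι : Type*} (s : List ι) (u : ι → RingQuot (lamRel D m₀)) (hu : ∀ i, u i ∈ LQ m₀ W) :
    ∃ g', GoodQ W (s.map fun i => expQ (u i)).prod g' := by
  induction s with
  | nil => exact ⟨1, GoodQ.refl W⟩
  | cons a s ih =>
    obtain ⟨g', h⟩ := ih
    exact ⟨_, by simpa using (GoodQ.exp α hW (hu a)).mul h⟩

theorem pow_cmp {k : ℕ} (hk : 1 ≤ k) {a b : RingQuot (lamRel D m₀)} (ha : a ∈ JQ D m₀ 1)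
    (hb : b ∈ JQ D m₀ k) (j : ℕ) : (a + b) ^ (j + 2) - a ^ (j + 2) ∈ JQ D m₀ (k + 1) := by
  have hab : a + b ∈ JQ D m₀ 1 := add_mem ha (JQ_mono hk hb)
  have e : ∀ n, (a + b) ^ (n + 1) - a ^ (n + 1) = ((a + b) ^ n - a ^ n) * (a + b) + a ^ n * b := by
    intro n; rw [pow_succ, pow_succ]; (simp only [mul_sub, sub_mul, mul_add, add_mul, mul_one, one_mul, mul_assoc]; abel)
  induction j with
  | zero =>
    rw [e]
    refine add_mem (JQ_mul ?_ hab) ?_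
    · simpa using hb
    · rw [add_comm k]; exact JQ_mul (by simpa using ha) hb
  | succ j ih =>
    rw [e]
    refine add_mem (JQ_mul_right ih _) ?_
    rw [pow_succ, mul_assoc, add_comm k]
    exact JQ_mul_left (JQ_mul ha hb) _

theorem exp_cmp (hm : 1 ≤ m₀) {k : ℕ} (hk : 1 ≤ k) {a b : RingQuot (lamRel D m₀)}
    (ha : a ∈ JQ D m₀ 1) (hb : b ∈ JQ D m₀ k) :
    expQ (a + b) - expQ a - b ∈ JQ D m₀ (k + 1) := by
  obtain ⟨m, rfl⟩ : ∃ m, m₀ = m + 1 := ⟨m₀ - 1, by omega⟩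
  have : expQ (a + b) - expQ a - b =
    ∑ j ∈ Finset.range m, ((j + 2).factorial : ℝ)⁻¹ • ((a + b) ^ (j + 2) - a ^ (j + 2)) := by
    rw [expQ, expQ, Finset.sum_range_succ', Finset.sum_range_succ',
      Finset.sum_range_succ' _ (m + 1), Finset.sum_range_succ' _ m]
    simp only [smul_sub, Finset.sum_sub_distrib]
    simp
    abel
  rw [this]
  exact Submodule.sum_mem _ fun j _ => Submodule.smul_mem _ _ (pow_cmp hk ha hb j)

theorem list_cmp (hm : 1 ≤ m₀) {k : ℕ} (hk : 1 ≤ k) {ι : Type*} (s : List ι)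
    (a b : ι → RingQuot (lamRel D m₀)) (ha : ∀ i, a i ∈ JQ D m₀ 1) (hb : ∀ i, b i ∈ JQ D m₀ k) :
    (s.map fun i => expQ (a i + b i)).prod - (s.map fun i => expQ (a i)).prod - (s.map b).sum
      ∈ JQ D m₀ (k + 1) ∧ (s.map fun i => expQ (a i)).prod - 1 ∈ JQ D m₀ 1
      ∧ (s.map b).sum ∈ JQ D m₀ k := by
  induction s with
  | nil => simp
  | cons i s ih =>
    obtain ⟨h1, h2, h3⟩ := ih
    simp only [List.map_cons, List.prod_cons, List.sum_cons]
    set A := (s.map fun i => expQ (a i)).prod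
    set B := (s.map fun i => expQ (a i + b i)).prod
    set S := (s.map b).sum
    have hc := exp_cmp hm hk (ha i) (hb i)
    have h0 := expQ_sub_one (ha i)
    set E := expQ (a i)
    set F := expQ (a i + b i)
    refine ⟨?_, ?_, add_mem (hb i) h3⟩
    · have : F * B - E * A - (b i + S) = (F - E - b i) * B + E * (B - A - S) + (E - 1) * S
          + b i * (B - A - S) + b i * S + b i * (A - 1) := by (simp only [mul_sub, sub_mul, mul_add, add_mul, mul_one, one_mul, mul_assoc]; abel)
      rw [this]
      refine add_mem (add_mem (add_mem (add_mem (add_mem ?_ ?_) ?_) ?_) ?_) ?_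
      · exact JQ_mul_right hc _
      · exact JQ_mul_left h1 _
      · rw [add_comm]; exact JQ_mul h0 h3
      · exact JQ_mul_left h1 _
      · exact JQ_mono (by omega) (JQ_mul (hb i) h3)
      · exact JQ_mul (hb i) h2
    · have : E * A - 1 = E * (A - 1) + (E - 1) := by (simp only [mul_sub, sub_mul, mul_add, add_mul, mul_one, one_mul, mul_assoc]; abel)
      rw [this]
      exact add_mem (JQ_mul_left h2 _) h0

theorem good_lead {W : ℕ → D} {h h' : RingQuot (lamRel D m₀)} (hg : GoodQ W h h') {k : ℕ}
    (hk : 1 ≤ k) (hkm : k ≤ m₀) (hJ : h - 1 ∈ JQ D m₀ k) :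
    ∃ w ∈ Submodule.span ℝ (Set.range W),
      h - 1 - (k : ℝ)⁻¹ • toQ m₀ (X ^ k * C w) ∈ JQ D m₀ (k + 1) := by
  obtain ⟨l, hl, e⟩ := hg.ld
  obtain ⟨r, hr⟩ := id hJ
  rw [LinearMap.mulLeft_apply] at hr
  have h1 := δQ_pow k r
  have h2 : δQ D m₀ h = δQ D m₀ (xQ D m₀ ^ k * r) := by rw [hr, map_sub, δQ_one, sub_zero]
  rw [← h2, hr] at h1
  have h3 : δQ D m₀ h ∈ JQ D m₀ k := by
    simpa using add_mem (JQ_mono (Nat.le_succ k) h1) (Submodule.smul_mem _ (k : ℝ) hJ)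
  have h4 : l ∈ JQ D m₀ k := by
    have : l = δQ D m₀ h * h' := by rw [e, mul_assoc, hg.mul_inv, mul_one]
    rw [this]; exact JQ_mul_right h3 _
  obtain ⟨w, hw, h5⟩ := LQ_lead W hl hkm h4
  refine ⟨w, hw, ?_⟩
  have h6 : l * (h - 1) ∈ JQ D m₀ (k + 1) := JQ_mono (by omega) (JQ_mul h4 hJ)
  have hk0 : (k : ℝ) ≠ 0 := by positivity
  have h7 : h - 1 - (k : ℝ)⁻¹ • toQ m₀ (X ^ k * C w) =
      (k : ℝ)⁻¹ • (-(δQ D m₀ h - (k : ℝ) • (h - 1)) + l * (h - 1) +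
        (l - toQ m₀ (X ^ k * C w))) := by
    have : -(δQ D m₀ h - (k : ℝ) • (h - 1)) + l * (h - 1) + (l - toQ m₀ (X ^ k * C w)) =
        (k : ℝ) • (h - 1) - toQ m₀ (X ^ k * C w) := by
      rw [e, mul_sub, mul_one]; abel
    rw [this, smul_sub, smul_smul, inv_mul_cancel₀ hk0, one_smul]
  rw [h7]
  exact Submodule.smul_mem _ _ (add_mem (add_mem (neg_mem h1) h6) h5)

theorem pW_add (W : ℕ → D) (p q : Polynomial ℝ) (i : ℕ) :
    pW W (p + q) i = pW W p i + pW W q i := by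
  simp [pW, add_mul]

theorem pW_mono (W : ℕ → D) (c : ℝ) (k i : ℕ) :
    pW W (C c * X ^ k) i = X ^ k * C (c • W i) := by
  ext j
  rw [pW, Polynomial.map_mul, map_C, Polynomial.map_pow, map_X, mul_assoc, coeff_C_mul,
    coeff_mul_C, coeff_mul_C, coeff_X_pow]
  split_ifs <;> simp [Algebra.smul_def]

/-- The ordered product. -/
noncomputable def ordQ (m₀ : ℕ) (W : ℕ → D) (P : ℕ → Polynomial ℝ) (K : ℕ) :
    RingQuot (lamRel D m₀) :=
  ((List.range (K + 1)).map fun i => expQ (toQ m₀ (pW W (P i) i))).prod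

theorem ordQ_ext (W : ℕ → D) (P : ℕ → Polynomial ℝ) (K t : ℕ) (h : ∀ i, K < i → P i = 0) :
    ordQ m₀ W P (K + t) = ordQ m₀ W P K := by
  induction t with
  | zero => rfl
  | succ t ih =>
    rw [← ih, ordQ, ← add_assoc, List.range_succ]
    have : expQ (toQ m₀ (pW W (P (K + t + 1)) (K + t + 1))) = 1 := by
      rw [h _ (by omega)]
      simp [pW, expQ, Finset.sum_range_succ']
    simp [this, ordQ]

theorem step {W : ℕ → D} (α : ℕ → ℕ → ℝ)
    (hW : ∀ n m : ℕ, W n * W m - W m * W n = α n m • W (n + m)) (hm : 1 ≤ m₀)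
    {g g' : RingQuot (lamRel D m₀)} (hg : GoodQ W g g') (k : ℕ) (hk : 1 ≤ k) (hkm : k ≤ m₀)
    (P : ℕ → Polynomial ℝ) (K : ℕ) (hP : ∀ i, (P i).eval 0 = 0) (hPK : ∀ i, K < i → P i = 0)
    (h : g - ordQ m₀ W P K ∈ JQ D m₀ k) :
    ∃ (P' : ℕ → Polynomial ℝ) (K' : ℕ), (∀ i, (P' i).eval 0 = 0) ∧ (∀ i, K' < i → P' i = 0) ∧
      g - ordQ m₀ W P' K' ∈ JQ D m₀ (k + 1) := by
  obtain ⟨o', ho⟩ := GoodQ.list α hW (List.range (K + 1)) (fun i => toQ m₀ (pW W (P i) i))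
    (fun i => pW_mem W _ (hP i) i)
  change GoodQ W (ordQ m₀ W P K) o' at ho
  set o := ordQ m₀ W P K with hodef
  have hh := ho.inv.mul hg
  have hJ : o' * g - 1 ∈ JQ D m₀ k := by
    have : o' * g - 1 = o' * (g - o) := by rw [mul_sub, ho.inv_mul]
    rw [this]; exact JQ_mul_left h _
  obtain ⟨w, hw, hlead⟩ := good_lead hh hk hkm hJ
  obtain ⟨c, hc⟩ := (Finsupp.mem_span_range_iff_exists_finsupp).1 hw
  let N := c.support.sup id
  have hN : ∀ i, N < i → c i = 0 := by
    intro i hi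
    by_contra hne
    exact absurd (Finset.le_sup (f := id) (Finsupp.mem_support_iff.2 hne)) (not_le.2 hi)
  let R : ℕ → Polynomial ℝ := fun i => C ((k : ℝ)⁻¹ * c i) * X ^ k
  have hR0 : ∀ i, (R i).eval 0 = 0 := by
    intro i; simp [R, show k ≠ 0 by omega]
  refine ⟨fun i => P i + R i, K + N, fun i => by simp [hP, hR0], ?_, ?_⟩
  · intro i hi
    simp [R, hPK i (by omega), hN i (by omega)]
  have hRJ : ∀ i, toQ m₀ (pW W (R i) i) ∈ JQ D m₀ k := by
    intro i
    refine ⟨toQ m₀ (C (((k : ℝ)⁻¹ * c i) • W i)), ?_⟩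
    rw [pW_mono, LinearMap.mulLeft_apply, xQ, ← map_pow, ← map_mul]
  obtain ⟨l1, -, -⟩ := list_cmp hm hk (List.range (K + N + 1)) (fun i => toQ m₀ (pW W (P i) i))
    (fun i => toQ m₀ (pW W (R i) i)) (fun i => LQ_le W (pW_mem W _ (hP i) i)) hRJ
  have hsum : ((List.range (K + N + 1)).map fun i => toQ m₀ (pW W (R i) i)).sum =
      (k : ℝ)⁻¹ • toQ m₀ (X ^ k * C w) := by
    have hls : ∀ (n : ℕ) (f : ℕ → RingQuot (lamRel D m₀)),
        ((List.range n).map f).sum = ∑ i ∈ Finset.range n, f i := by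
      intro n f
      induction n with
      | zero => simp
      | succ n ih => rw [List.range_succ, Finset.sum_range_succ, ← ih]; simp
    have hw' : w = ∑ i ∈ Finset.range (K + N + 1), c i • W i := by
      rw [← hc]
      refine Finsupp.sum_of_support_subset c (fun i hi => ?_) _ (by simp)
      rw [Finset.mem_range]
      by_contra hlt
      exact (Finsupp.mem_support_iff.1 hi) (hN i (by omega))
    rw [hls, hw', map_sum, Finset.mul_sum, map_sum, Finset.smul_sum]
    refine Finset.sum_congr rfl fun i _ => ?_
    rw [pW_mono, ← toQ_smul_s14, mul_smul, ← smul_C, mul_smul_comm]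
  rw [hsum] at l1
  have e1 : ((List.range (K + N + 1)).map fun i => expQ (toQ m₀ (pW W (P i) i))).prod = o :=
    ordQ_ext W P K N hPK
  have e2 : ((List.range (K + N + 1)).map fun i =>
      expQ (toQ m₀ (pW W (P i) i) + toQ m₀ (pW W (R i) i))).prod =
      ordQ m₀ W (fun i => P i + R i) (K + N) := by
    simp only [ordQ, pW_add, map_add]
  rw [e1, e2] at l1
  set o2 := ordQ m₀ W (fun i => P i + R i) (K + N)
  set v := (k : ℝ)⁻¹ • toQ m₀ (X ^ k * C w)
  have e3 : g = o * (o' * g) := by rw [← mul_assoc, ho.mul_inv, one_mul]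
  have e4 : g - o2 = (o - 1) * (o' * g - 1) + (o' * g - 1 - v) - (o2 - o - v) := by
    have : (o - 1) * (o' * g - 1) = o * (o' * g) - o' * g - o + 1 := by (simp only [mul_sub, sub_mul, mul_add, add_mul, mul_one, one_mul, mul_assoc]; abel)
    rw [this, ← e3]; abel
  rw [e4]
  refine sub_mem (add_mem ?_ hlead) l1
  rw [add_comm]; exact JQ_mul ho.one hJ

theorem all_steps {W : ℕ → D} (α : ℕ → ℕ → ℝ)
    (hW : ∀ n m : ℕ, W n * W m - W m * W n = α n m • W (n + m)) (hm : 1 ≤ m₀)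
    {g g' : RingQuot (lamRel D m₀)} (hg : GoodQ W g g') (k : ℕ) (hkm : k ≤ m₀) :
    ∃ (P : ℕ → Polynomial ℝ) (K : ℕ), (∀ i, (P i).eval 0 = 0) ∧ (∀ i, K < i → P i = 0) ∧
      g - ordQ m₀ W P K ∈ JQ D m₀ (k + 1) := by
  induction k with
  | zero =>
    refine ⟨fun _ => 0, 0, by simp, by simp, ?_⟩
    have : ordQ m₀ W (fun _ => 0) 0 = 1 := by
      simp [ordQ, pW, expQ, Finset.sum_range_succ']
    rw [this]
    exact hg.one
  | succ k ih =>
    obtain ⟨P, K, h1, h2, h3⟩ := ih (by omega)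
    exact step α hW hm hg (k + 1) (by omega) hkm P K h1 h2 h3

end concretePart

/-- Under the Witt condition, any finite product of exponentials of elements
`u_j = ∑_{i=0}^{k_j} p_{j,i}·W_i` (with `p_{j,i}(0) = 0`) equals, in `Q`, an ordered
product `exp(P₀·W₀)·exp(P₁·W₁)⋯exp(P_K·W_K)` with `P_i ∈ ℝ[λ]`, `P_i(0) = 0`. -/
theorem witt_ordered_decomposition {D : Type*} [Ring D] [Algebra ℝ D]
    (W : ℕ → D) (α : ℕ → ℕ → ℝ)
    (hW : ∀ n m : ℕ, W n * W m - W m * W n = α n m • W (n + m))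
    (m₀ : ℕ) (hm₀ : 1 ≤ m₀)
    (n : ℕ) (kk : Fin n → ℕ) (p : Fin n → ℕ → Polynomial ℝ)
    (hp : ∀ j i, (p j i).eval 0 = 0) :
    ∃ (K : ℕ) (P : ℕ → Polynomial ℝ),
      (∀ i, (P i).eval 0 = 0) ∧
      (List.ofFn fun j : Fin n =>
          expQ (toQ m₀ (∑ i ∈ Finset.range (kk j + 1), pW W (p j i) i))).prod =
        ((List.range (K + 1)).map fun i => expQ (toQ m₀ (pW W (P i) i))).prod := by
  obtain ⟨g', hg⟩ := GoodQ.list (m₀ := m₀) α hW (List.finRange n)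
    (fun j => toQ m₀ (∑ i ∈ Finset.range (kk j + 1), pW W (p j i) i)) (fun j => by
      rw [map_sum]
      exact Submodule.sum_mem _ fun i _ => pW_mem W _ (hp j i) i)
  obtain ⟨P, K, h1, -, h3⟩ := all_steps α hW hm₀ hg m₀ le_rfl
  refine ⟨K, P, h1, ?_⟩
  rw [List.ofFn_eq_map]
  exact sub_eq_zero.1 (JQ_top h3)
end
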